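/- Assume n ≥ 3 is odd, and let u be H-harmonic on B_n with a boundary distribution. The following are equivalent: (1) u is constant; (2) N^{n-1}u has a boundary distribution, i.e. lim_{r→1⁻} ∫_{S^{n-1}} N^{n-1}u(rζ)Φ(ζ)dσ(ζ) exists for every Φ ∈ C^∞(S^{n-1}); (3) ∫_{S^{n-1}} N^{n-1}u(rζ)Φ(ζ)dσ(ζ) = o(log(1/(1-r))) as r → 1⁻, for every Φ ∈ C^∞(S^{n-1}). -/

import Mathlib

/-!
For odd `n = 2k + 1` a nonconstant `H`-harmonic function is never smooth up to the sphere, and the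
obstruction is a logarithm that first shows up in `N^{n-1}u`. It is isolated by separation of
variables.

*Angular part.* The rotation fields `x_i ∂_j - x_j ∂_i` are skew for the pairing with `σ`, by
rotation invariance of `σ` (`integral_linDer_skew`). Hence `-½ Σ (x_i ∂_j - x_j ∂_i)²` is symmetric
and nonnegative on homogeneous polynomials of each degree, and its eigenvectors, with eigenvalues
`μ ≥ 0`, span all polynomials (`eigenpoly_dense`). As polynomials are dense in the continuous
functions on the sphere, it is enough that for each eigenvector `p` the pairing
`W(r) = ∫ u(rζ) p(ζ) dσ(ζ)` does not depend on `r` (`eq_zero_of_pairing`, `const_of_small`).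

*Radial part.* The equation `Du = 0` becomes an ordinary differential equation for `W`
(`radial_equation`). In the variable `x = (r + 1/r)/2 ∈ (1, ∞)` and with `m = n - 2`, `g(x) = W(r)`,
it reads `(x² - 1) g'' + (1 - m) x g' = μ g`. Differentiating it `k` times (`RadialODE.iter`), the
function `h = g^{(k)}` satisfies the Legendre-type equation `((x² - 1) h')' = μ' h` with `μ' ≥ 0`,
so the energy `(x² - 1) h h'` is nondecreasing in `x`.

* If the energy is nonnegative everywhere, `h²` is nondecreasing. As `g` is bounded for `x → ∞`
  (that is, `r → 0`), this forces `h = 0`, and then `g` is a bounded polynomial, hence constant.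
* If the energy is negative somewhere, it stays negative and bounded away from `0` towards `x = 1`,
  and `|h|` grows there at least like a multiple of `log (1 / (x - 1))` (`log_growth`). Now
  `N^{n-1} W = N^{2k} W` is a combination of `g, g', …, g^{(k)}` with polynomial coefficients, the
  last of which takes at `x = 1` the value `∏_{i<k} (m - 2i)`, nonzero because `m` is odd
  (`even_power`). The lower derivatives are `o(h)`, so `N^{n-1} W` is not `o(log (1 / (1 - r)))`
  (`no_singular`).

Hence the little-o condition makes every `W` constant (`radial_const`, `chain_const`) and `u`
constant; the remaining implications are immediate.
-/

open MeasureTheory Metric Filter Topology Set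
open scoped ContDiff ENNReal NNReal

noncomputable section

/-- `E n` is the Euclidean space `ℝⁿ`. -/
abbrev E (n : ℕ) := EuclideanSpace ℝ (Fin n)

/-- The normalized surface measure `σ` on the unit sphere `S^{n-1}` (total mass `1`). -/
noncomputable def sphMeasure (n : ℕ) : Measure (E n) :=
  ((μH[(n : ℝ) - 1] (sphere (0 : E n) 1))⁻¹) • ((μH[(n : ℝ) - 1]).restrict (sphere (0 : E n) 1))

/-- The Euclidean Laplacian `Δu(x) = Σ ∂²u/∂x_i²`. -/
noncomputable def lap (n : ℕ) (u : E n → ℝ) (x : E n) : ℝ :=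
  ∑ i : Fin n, fderiv ℝ (fun y => fderiv ℝ u y (EuclideanSpace.single i 1)) x (EuclideanSpace.single i 1)

/-- The normal derivation operator `Nu(x) = Σ x_i ∂u/∂x_i(x)`, i.e. the derivative of `u`
at `x` in the direction `x`. -/
noncomputable def Nder (n : ℕ) (u : E n → ℝ) (x : E n) : ℝ := fderiv ℝ u x x

/-- `u` is `H`-harmonic on `B_n` :
`Du(x) = (1-|x|²)²Δu(x) + 2(n-2)(1-|x|²)Nu(x) = 0` on the unit ball. -/
def HHarmonic (n : ℕ) (u : E n → ℝ) : Prop :=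
  ∀ x ∈ ball (0 : E n) 1,
    (1 - ‖x‖ ^ 2) ^ 2 * lap n u x + 2 * ((n : ℝ) - 2) * (1 - ‖x‖ ^ 2) * Nder n u x = 0

/-- The hyperbolic Poisson kernel `P_h(x,ξ) = ((1-|x|²)/|x-ξ|²)^{n-1}`. -/
noncomputable def Ph (n : ℕ) (x ξ : E n) : ℝ := ((1 - ‖x‖ ^ 2) / ‖x - ξ‖ ^ 2) ^ (n - 1)

/-- The Euclidean Poisson kernel `P_e(x,ξ) = (1-|x|²)/|x-ξ|ⁿ`. -/
noncomputable def Pe (n : ℕ) (x ξ : E n) : ℝ := (1 - ‖x‖ ^ 2) / ‖x - ξ‖ ^ n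

/-- `u` has a boundary distribution : for every smooth `Φ` on the sphere,
`∫ u(rζ)Φ(ζ)dσ(ζ)` has a finite limit as `r → 1⁻`. -/
def HasBoundaryDistribution (n : ℕ) (u : E n → ℝ) : Prop :=
  ∀ Φ : E n → ℝ, ContDiff ℝ ∞ Φ →
    ∃ L : ℝ, Tendsto (fun r : ℝ => ∫ ζ, u (r • ζ) * Φ ζ ∂(sphMeasure n)) (𝓝[<] (1 : ℝ)) (𝓝 L)

/-- The operator `N = Σ x_i ∂/∂x_i` acting on functions. -/
noncomputable def NOp (n : ℕ) : (E n → ℝ) → (E n → ℝ) := fun u x => fderiv ℝ u x x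

/-! ### Solutions of the radial equation -/

/-- A sequence `g 0, g 1, …` of functions on `(1, ∞)`, each the derivative of the previous one. -/
def DerivSeq (g : ℕ → ℝ → ℝ) : Prop :=
  ∀ i, ∀ x, 1 < x → HasDerivAt (g i) (g (i + 1) x) x

theorem DerivSeq.neg {g : ℕ → ℝ → ℝ} (hg : DerivSeq g) : DerivSeq (fun i x => -g i x) :=
  fun i x hx => (hg i x hx).neg

/-- The radial equation for a spherical eigenfunction of eigenvalue `-lam`, in the variable
`x = (r + 1/r)/2`; here `m` stands for `n - 2`. -/
def RadialODE (m lam : ℝ) (g : ℕ → ℝ → ℝ) : Prop :=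
  ∀ x, 1 < x → (x ^ 2 - 1) * g 2 x + (1 - m) * x * g 1 x = lam * g 0 x

/-- Differentiating the radial equation `i` times shifts `m` by `2` each time. -/
theorem RadialODE.iter {m lam : ℝ} {g : ℕ → ℝ → ℝ} (hg : DerivSeq g) (h : RadialODE m lam g)
    (i : ℕ) : ∀ x, 1 < x → (x ^ 2 - 1) * g (i + 2) x + (2 * i + 1 - m) * x * g (i + 1) x
      = (lam + i * (m - i)) * g i x := by
  induction i with
  | zero =>
    intro x hx
    have := h x hx
    simp only [Nat.cast_zero, mul_zero, zero_add, zero_mul, add_zero]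
    linarith
  | succ i ih =>
    intro x hx
    have hsq : HasDerivAt (fun y : ℝ => y ^ 2 - 1) (2 * x) x := by
      simpa using (hasDerivAt_pow 2 x).sub_const 1
    have h1 : HasDerivAt
        (fun y => (y ^ 2 - 1) * g (i + 2) y + (2 * i + 1 - m) * y * g (i + 1) y)
        ((2 * x) * g (i + 2) x + (x ^ 2 - 1) * g (i + 3) x
          + (((2 * i + 1 - m) * 1) * g (i + 1) x + (2 * i + 1 - m) * x * g (i + 2) x)) x :=
      (hsq.mul (hg (i + 2) x hx)).add
        (((hasDerivAt_id x).const_mul (2 * (i : ℝ) + 1 - m)).mul (hg (i + 1) x hx))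
    have h2 : HasDerivAt (fun y => (lam + i * (m - i)) * g i y)
        ((lam + i * (m - i)) * g (i + 1) x) x := (hg i x hx).const_mul _
    have heq : (fun y => (y ^ 2 - 1) * g (i + 2) y + (2 * i + 1 - m) * y * g (i + 1) y)
        =ᶠ[𝓝 x] (fun y => (lam + i * (m - i)) * g i y) := by
      filter_upwards [Ioi_mem_nhds hx] with y hy using ih y hy
    have := h1.unique (h2.congr_of_eventuallyEq heq)
    push_cast
    linear_combination this

theorem tendsto_of_deriv_ge {f f' : ℝ → ℝ} {c X : ℝ} (hc : 0 < c)
    (hf : ∀ x, X ≤ x → HasDerivAt f (f' x) x) (hb : ∀ x, X ≤ x → c ≤ f' x) :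
    Tendsto f atTop atTop := by
  have key : ∀ x, X ≤ x → f X + c * (x - X) ≤ f x := by
    intro x hx
    have := (convex_Icc X x).mul_sub_le_image_sub_of_le_deriv (f := f) (C := c)
      (fun y hy => (hf y hy.1).continuousAt.continuousWithinAt)
      (fun y hy => by
        rw [interior_Icc] at hy
        exact (hf y hy.1.le).differentiableAt.differentiableWithinAt)
      (fun y hy => by
        rw [interior_Icc] at hy
        rw [(hf y hy.1.le).deriv]; exact hb y hy.1.le)
      X (left_mem_Icc.2 hx) x (right_mem_Icc.2 hx) hx
    linarith
  refine tendsto_atTop_mono' atTop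
    (f₁ := fun x => f X + c * (x - X)) ?_ ?_
  · filter_upwards [eventually_ge_atTop X] with x hx using key x hx
  · exact tendsto_atTop_add_const_left _ _
      ((tendsto_atTop_add_const_right atTop (-X) tendsto_id).const_mul_atTop hc)

theorem DerivSeq.tendsto_of_ge {g : ℕ → ℝ → ℝ} (hg : DerivSeq g) (j : ℕ) :
    ∀ c X : ℝ, 0 < c → (∀ x, X ≤ x → c ≤ g (j + 1) x) → Tendsto (g 0) atTop atTop := by
  induction j with
  | zero =>
    intro c X hc hb
    exact tendsto_of_deriv_ge (X := max X 2) hc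
      (fun x hx => hg 0 x (lt_of_lt_of_le (by norm_num) (le_trans (le_max_right X 2) hx)))
      (fun x hx => hb x (le_trans (le_max_left X 2) hx))
  | succ j ih =>
    intro c X hc hb
    have h1 : Tendsto (g (j + 1)) atTop atTop := tendsto_of_deriv_ge (X := max X 2) hc
      (fun x hx => hg _ x (lt_of_lt_of_le (by norm_num) (le_trans (le_max_right X 2) hx)))
      (fun x hx => hb x (le_trans (le_max_left X 2) hx))
    obtain ⟨Y, hY⟩ := eventually_atTop.1 (h1.eventually_ge_atTop 1)
    exact ih 1 Y one_pos hY

/-- A derivative of positive order of a function bounded near `∞` cannot stay above a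
positive constant. -/
theorem DerivSeq.not_bounded {g : ℕ → ℝ → ℝ} (hg : DerivSeq g) {C : ℝ}
    (hbdd : ∀ᶠ x in atTop, |g 0 x| ≤ C) (j : ℕ) {c X : ℝ} (hc : 0 < c)
    (h : ∀ x, X ≤ x → c ≤ g (j + 1) x) : False := by
  have h1 := hg.tendsto_of_ge j c X hc h
  obtain ⟨x, hx1, hx2⟩ := (hbdd.and (h1.eventually_gt_atTop C)).exists
  exact absurd (le_trans (le_abs_self _) hx1) (not_le.2 hx2)

/-- If the `(j + 1)`-st derivative vanishes then so do all lower ones down to the first, as a nonzero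
constant derivative would make the function unbounded. -/
theorem DerivSeq.const_of_zero {g : ℕ → ℝ → ℝ} (hg : DerivSeq g) {C : ℝ}
    (hbdd : ∀ᶠ x in atTop, |g 0 x| ≤ C) (j : ℕ) (h : ∀ x, 1 < x → g (j + 1) x = 0) :
    ∃ c, ∀ x, 1 < x → g 0 x = c := by
  have aux : ∀ i, (∀ x, 1 < x → g (i + 1) x = 0) → ∃ c, ∀ x, 1 < x → g i x = c := by
    intro i hi
    refine ⟨g i 2, fun x hx => ?_⟩
    refine (convex_Ioi (1 : ℝ)).is_const_of_fderivWithin_eq_zero (𝕜 := ℝ) (f := g i) ?_ ?_ hx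
      (by norm_num : (2 : ℝ) ∈ Ioi 1)
    · intro y hy
      exact (hg i y hy).differentiableAt.differentiableWithinAt
    · intro y hy
      rw [fderivWithin_of_isOpen isOpen_Ioi hy]
      have := (hg i y hy)
      rw [hi y hy] at this
      ext
      simp [this.hasFDerivAt.fderiv]
  induction j with
  | zero => exact aux 0 h
  | succ j ih =>
    obtain ⟨c, hc⟩ := aux (j + 1) h
    apply ih
    rcases lt_trichotomy c 0 with h0 | h0 | h0
    · exfalso
      refine hg.neg.not_bounded (C := C) (by simpa using hbdd) j (c := -c) (X := 2) (by linarith) ?_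
      intro x hx
      rw [hc x (by linarith)]
    · intro x hx
      rw [hc x hx, h0]
    · exfalso
      refine hg.not_bounded hbdd j (c := c) (X := 2) h0 ?_
      intro x hx
      rw [hc x (by linarith)]

/-- If `(x² - 1) h h' ≥ 0` for the `k`-th derivative `h` of a function bounded near `∞`, then `h²`
is nondecreasing, which forces `h = 0`. -/
theorem DerivSeq.zero_of_nonneg {g : ℕ → ℝ → ℝ} (hg : DerivSeq g) {C : ℝ}
    (hbdd : ∀ᶠ x in atTop, |g 0 x| ≤ C) (j : ℕ)
    (hP : ∀ x, 1 < x → 0 ≤ g (j + 1) x * g (j + 2) x) : ∀ x, 1 < x → g (j + 1) x = 0 := by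
  intro x₀ hx₀
  by_contra hne
  have hmono : MonotoneOn (fun x => g (j + 1) x ^ 2) (Ioi 1) := by
    have hd : ∀ x ∈ Ioi (1 : ℝ), HasDerivAt (fun x => g (j + 1) x ^ 2)
        (2 * (g (j + 1) x * g (j + 2) x)) x := by
      intro x hx
      exact ((hg (j + 1) x hx).pow 2).congr_deriv (by push_cast; ring)
    refine monotoneOn_of_deriv_nonneg (convex_Ioi 1)
      (fun x hx => (hd x hx).continuousAt.continuousWithinAt)
      (fun x hx => ?_) (fun x hx => ?_)
    · rw [interior_Ioi] at hx
      exact (hd x hx).differentiableAt.differentiableWithinAt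
    · rw [interior_Ioi] at hx
      rw [(hd x hx).deriv]
      have := hP x hx
      linarith
  have hcont : ContinuousOn (g (j + 1)) (Ici x₀) := fun y hy =>
    (hg (j + 1) y (lt_of_lt_of_le hx₀ hy)).continuousAt.continuousWithinAt
  have habs : ∀ x, x₀ ≤ x → |g (j + 1) x₀| ≤ |g (j + 1) x| := by
    intro x hx
    exact sq_le_sq.1 (hmono hx₀ (lt_of_lt_of_le hx₀ hx) hx)
  have hnz : ∀ x, x₀ ≤ x → g (j + 1) x ≠ 0 := by
    intro x hx h0
    have := habs x hx
    rw [h0, abs_zero] at this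
    exact hne (abs_eq_zero.1 (le_antisymm this (abs_nonneg _)))
  rcases lt_or_gt_of_ne hne with hlt | hgt
  · refine hg.neg.not_bounded (C := C) (by simpa using hbdd) j (c := -g (j + 1) x₀) (X := x₀)
      (by linarith) ?_
    intro x hx
    have hneg : g (j + 1) x < 0 := by
      by_contra hcon
      push Not at hcon
      obtain ⟨z, hz, hz0⟩ := isPreconnected_Ici.intermediate_value (mem_Ici.2 (le_refl x₀)) hx
        hcont (show (0 : ℝ) ∈ Icc _ _ from ⟨hlt.le, hcon⟩)
      exact hnz z hz hz0
    have := habs x hx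
    rwa [abs_of_neg hlt, abs_of_neg hneg] at this
  · refine hg.not_bounded hbdd j (c := g (j + 1) x₀) (X := x₀) hgt ?_
    intro x hx
    have hpos : 0 < g (j + 1) x := by
      by_contra hcon
      push Not at hcon
      obtain ⟨z, hz, hz0⟩ := isPreconnected_Ici.intermediate_value hx (mem_Ici.2 (le_refl x₀))
        hcont (show (0 : ℝ) ∈ Icc _ _ from ⟨hcon, hgt.le⟩)
      exact hnz z hz hz0
    have := habs x hx
    rwa [abs_of_pos hgt, abs_of_pos hpos] at this


/-- If `q = (x² - 1) h'` satisfies `q' = μ h` with `μ ≥ 0`, and `h > 0 > h'` at one point `x₁`, then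
going from `x₁` down to `1` the function `h` increases at least like a multiple of
`log (1 / (x - 1))`. -/
theorem log_growth {h h1 h2 : ℝ → ℝ} {μ x₁ : ℝ} (hμ : 0 ≤ μ)
    (d1 : ∀ x, 1 < x → HasDerivAt h (h1 x) x) (d2 : ∀ x, 1 < x → HasDerivAt h1 (h2 x) x)
    (ode : ∀ x, 1 < x → (x ^ 2 - 1) * h2 x + 2 * x * h1 x = μ * h x)
    (hx₁ : 1 < x₁) (hpos : 0 < h x₁) (hneg : h1 x₁ < 0) :
    (∀ x ∈ Ioc 1 x₁, 0 < h x) ∧ AntitoneOn h (Ioc 1 x₁) ∧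
      ∃ c, 0 < c ∧ ∀ x ∈ Ioc 1 x₁, h x₁ + c * (Real.log (x₁ - 1) - Real.log (x - 1)) ≤ h x := by
  have hq : ∀ x, 1 < x → HasDerivAt (fun y => (y ^ 2 - 1) * h1 y) (μ * h x) x := by
    intro x hx
    have hsq : HasDerivAt (fun y : ℝ => y ^ 2 - 1) (2 * x) x := by
      simpa using (hasDerivAt_pow 2 x).sub_const 1
    exact (hsq.mul (d2 x hx)).congr_deriv (by linarith [ode x hx])
  have hint : interior (Ioc 1 x₁) ⊆ Ioi 1 := fun x hx => (interior_subset hx).1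
  -- the energy `(x² - 1) h' h` is nondecreasing
  have hP : MonotoneOn (fun y => (y ^ 2 - 1) * h1 y * h y) (Ioc 1 x₁) := by
    have hd : ∀ x, 1 < x → HasDerivAt (fun y => (y ^ 2 - 1) * h1 y * h y)
        (μ * h x * h x + (x ^ 2 - 1) * h1 x * h1 x) x := fun x hx => (hq x hx).mul (d1 x hx)
    refine monotoneOn_of_deriv_nonneg (convex_Ioc 1 x₁)
      (fun x hx => (hd x hx.1).continuousAt.continuousWithinAt)
      (fun x hx => (hd x (hint hx)).differentiableAt.differentiableWithinAt) (fun x hx => ?_)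
    rw [(hd x (hint hx)).deriv]
    have hx1 : 1 < x := hint hx
    have : 0 ≤ x ^ 2 - 1 := by nlinarith
    have h3 := mul_nonneg hμ (mul_self_nonneg (h x))
    have h4 := mul_nonneg this (mul_self_nonneg (h1 x))
    nlinarith
  have hxx : x₁ ∈ Ioc 1 x₁ := ⟨hx₁, le_rfl⟩
  have hnz : ∀ x ∈ Ioc 1 x₁, h x ≠ 0 := by
    intro x hx h0
    have := hP hx hxx hx.2
    simp only [h0, mul_zero] at this
    have h5 : 0 < x₁ ^ 2 - 1 := by nlinarith
    have := mul_neg_of_neg_of_pos (mul_neg_of_pos_of_neg h5 hneg) hpos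
    linarith
  have hp : ∀ x ∈ Ioc 1 x₁, 0 < h x := by
    intro x hx
    by_contra hcon
    push Not at hcon
    obtain ⟨z, hz, hz0⟩ := isPreconnected_Ioc.intermediate_value hx hxx
      (fun y hy => (d1 y hy.1).continuousAt.continuousWithinAt)
      (show (0 : ℝ) ∈ Icc _ _ from ⟨hcon, hpos.le⟩)
    exact hnz z hz hz0
  have hqm : MonotoneOn (fun y => (y ^ 2 - 1) * h1 y) (Ioc 1 x₁) := by
    refine monotoneOn_of_deriv_nonneg (convex_Ioc 1 x₁)
      (fun x hx => (hq x hx.1).continuousAt.continuousWithinAt)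
      (fun x hx => (hq x (hint hx)).differentiableAt.differentiableWithinAt) (fun x hx => ?_)
    rw [(hq x (hint hx)).deriv]
    exact mul_nonneg hμ (hp x (interior_subset hx)).le
  have h5 : 0 < x₁ ^ 2 - 1 := by nlinarith
  set c₀ := -((x₁ ^ 2 - 1) * h1 x₁) with hc₀
  have hc₀pos : 0 < c₀ := by rw [hc₀]; nlinarith
  have hder : ∀ x ∈ Ioc 1 x₁, h1 x ≤ -(c₀ / (x₁ + 1)) * (x - 1)⁻¹ := by
    intro x hx
    have hle : (x ^ 2 - 1) * h1 x ≤ -c₀ := by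
      have := hqm hx hxx hx.2
      simp only at this
      rw [hc₀]; linarith
    have hx1 : 0 < x - 1 := by linarith [hx.1]
    have hx2 : 0 < x₁ + 1 := by linarith
    have hneg' : (x - 1) * h1 x ≤ 0 := by
      by_contra hcon
      push Not at hcon
      have : 0 < (x + 1) * ((x - 1) * h1 x) := mul_pos (by linarith) hcon
      nlinarith
    have : (x - 1) * h1 x * (x₁ + 1) ≤ -c₀ := by nlinarith [hx.2]
    rw [← div_eq_mul_inv, le_div_iff₀ hx1, ← neg_div, le_div_iff₀ hx2]
    linarith
  have hcp : 0 < c₀ / (x₁ + 1) := div_pos hc₀pos (by linarith)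
  refine ⟨hp, ?_, c₀ / (x₁ + 1), hcp, ?_⟩
  · refine antitoneOn_of_deriv_nonpos (convex_Ioc 1 x₁)
      (fun x hx => (d1 x hx.1).continuousAt.continuousWithinAt)
      (fun x hx => (d1 x (hint hx)).differentiableAt.differentiableWithinAt) (fun x hx => ?_)
    rw [(d1 x (hint hx)).deriv]
    refine (hder x (interior_subset hx)).trans ?_
    have : 0 < (x - 1)⁻¹ := inv_pos.2 (sub_pos.2 (hint hx))
    nlinarith [mul_pos hcp this]
  · have hanti : AntitoneOn (fun x => h x + c₀ / (x₁ + 1) * Real.log (x - 1)) (Ioc 1 x₁) := by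
      have hd : ∀ x, 1 < x → HasDerivAt (fun x => h x + c₀ / (x₁ + 1) * Real.log (x - 1))
          (h1 x + c₀ / (x₁ + 1) * (1 / (x - 1))) x := fun x hx =>
        (d1 x hx).add ((((hasDerivAt_id x).sub_const 1).log (sub_pos.2 hx).ne').const_mul _)
      refine antitoneOn_of_deriv_nonpos (convex_Ioc 1 x₁)
        (fun x hx => (hd x hx.1).continuousAt.continuousWithinAt)
        (fun x hx => (hd x (hint hx)).differentiableAt.differentiableWithinAt) (fun x hx => ?_)
      rw [(hd x (hint hx)).deriv]
      have := hder x (interior_subset hx)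
      rw [one_div]
      linarith
    intro x hx
    have := hanti hx hxx hx.2
    simp only at this
    linarith

theorem tendsto_log_atTop :
    Tendsto (fun x : ℝ => -Real.log (x - 1)) (𝓝[>] 1) atTop := by
  refine tendsto_neg_atBot_atTop.comp (Real.tendsto_log_nhdsGT_zero.comp ?_)
  refine tendsto_nhdsWithin_iff.2 ⟨?_, ?_⟩
  · have : Tendsto (fun x : ℝ => x - 1) (𝓝 1) (𝓝 (1 - 1)) :=
      (continuous_id.sub continuous_const).tendsto 1
    rw [sub_self] at this
    exact this.mono_left nhdsWithin_le_nhds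
  · filter_upwards [self_mem_nhdsWithin] with x hx using sub_pos.2 (mem_Ioi.1 hx)

/-- A primitive of a function dominated by a positive decreasing `h` is again dominated by `h`,
and is even `o(h)` at `1` when `h → ∞` there. -/
theorem primitive_small {f f' h : ℝ → ℝ} {x₁ K : ℝ} (hx₁ : 1 < x₁)
    (hf : ∀ x, 1 < x → HasDerivAt f (f' x) x) (hp : ∀ x ∈ Ioc 1 x₁, 0 < h x)
    (ha : AntitoneOn h (Ioc 1 x₁)) (hK : ∀ x ∈ Ioc 1 x₁, |f' x| ≤ K * h x) :
    (∃ K', ∀ x ∈ Ioc 1 x₁, |f x| ≤ K' * h x) ∧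
      (Tendsto h (𝓝[>] 1) atTop → Tendsto (fun x => f x / h x) (𝓝[>] 1) (𝓝 0)) := by
  have hK0 : 0 ≤ K := by
    have := (abs_nonneg _).trans (hK x₁ ⟨hx₁, le_rfl⟩)
    exact nonneg_of_mul_nonneg_left this (hp x₁ ⟨hx₁, le_rfl⟩)
  have key : ∀ x y, 1 < x → x ≤ y → y ≤ x₁ → |f x| ≤ |f y| + K * h x * (y - x) := by
    intro x y hx hxy hy
    have := (convex_Icc x y).norm_image_sub_le_of_norm_hasDerivWithin_le (f := f) (f' := f')
      (C := K * h x)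
      (fun z hz => (hf z (lt_of_lt_of_le hx hz.1)).hasDerivWithinAt)
      (fun z hz => by
        have hz1 : 1 < z := lt_of_lt_of_le hx hz.1
        refine (hK z ⟨hz1, hz.2.trans hy⟩).trans ?_
        exact mul_le_mul_of_nonneg_left
          (ha ⟨hx, hxy.trans hy⟩ ⟨hz1, hz.2.trans hy⟩ hz.1) hK0)
      (right_mem_Icc.2 hxy) (left_mem_Icc.2 hxy)
    rw [Real.norm_eq_abs, Real.norm_eq_abs, abs_sub_comm x y, abs_of_nonneg (sub_nonneg.2 hxy)]
      at this
    have h2 := abs_sub_abs_le_abs_sub (f x) (f y)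
    linarith
  have hxx : x₁ ∈ Ioc 1 x₁ := ⟨hx₁, le_rfl⟩
  refine ⟨⟨|f x₁| / h x₁ + K * (x₁ - 1), fun x hx => ?_⟩, fun ht => ?_⟩
  · have h1 := key x x₁ hx.1 hx.2 le_rfl
    have h2 : |f x₁| ≤ |f x₁| / h x₁ * h x := by
      rw [div_mul_eq_mul_div, le_div_iff₀ (hp _ hxx)]
      exact mul_le_mul_of_nonneg_left (ha hx hxx hx.2) (abs_nonneg _)
    have h3 : K * h x * (x₁ - x) ≤ K * h x * (x₁ - 1) :=
      mul_le_mul_of_nonneg_left (by linarith [hx.1]) (mul_nonneg hK0 (hp x hx).le)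
    nlinarith
  · rw [Metric.tendsto_nhds]
    intro ε hε
    set y := min x₁ (1 + ε / (4 * (K + 1))) with hy
    have hK1 : 0 < 4 * (K + 1) := by linarith
    have hy1 : 1 < y := lt_min hx₁ (by linarith [div_pos hε hK1])
    have hKy : K * (y - 1) ≤ ε / 4 := by
      have : y - 1 ≤ ε / (4 * (K + 1)) := by
        have := min_le_right x₁ (1 + ε / (4 * (K + 1))); linarith
      calc K * (y - 1) ≤ (K + 1) * (ε / (4 * (K + 1))) := by
            apply mul_le_mul (by linarith) this (by linarith) (by linarith)
        _ = ε / 4 := by field_simp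
    filter_upwards [Ioo_mem_nhdsGT hy1, ht.eventually_ge_atTop (|f y| / (ε / 4))] with x hx hhx
    have hxI : x ∈ Ioc 1 x₁ := ⟨hx.1, hx.2.le.trans (min_le_left _ _)⟩
    have h1 := key x y hx.1 hx.2.le (min_le_left _ _)
    have hpx := hp x hxI
    rw [div_le_iff₀ (by linarith)] at hhx
    rw [dist_zero_right, norm_div, Real.norm_eq_abs, Real.norm_eq_abs, abs_of_pos hpx,
      div_lt_iff₀ hpx]
    have h2 : K * h x * (y - x) ≤ ε / 4 * h x := by
      have : K * h x * (y - x) ≤ K * h x * (y - 1) :=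
        mul_le_mul_of_nonneg_left (by linarith [hx.1]) (mul_nonneg hK0 hpx.le)
      nlinarith
    nlinarith [mul_pos hε hpx]

/-- The singular case is excluded: if `h = g k` blows up logarithmically at `1`, so does every
combination `∑ cᵢ gᵢ` with continuous coefficients in which `c_k(1) ≠ 0`. -/
theorem no_singular {g : ℕ → ℝ → ℝ} (hg : DerivSeq g) {k : ℕ} {μ x₁ : ℝ} (hμ : 0 ≤ μ)
    (ode : ∀ x, 1 < x → (x ^ 2 - 1) * g (k + 2) x + 2 * x * g (k + 1) x = μ * g k x)
    (hx₁ : 1 < x₁) (hpos : 0 < g k x₁) (hneg : g (k + 1) x₁ < 0)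
    (c : ℕ → Polynomial ℝ) (hc : (c k).eval 1 ≠ 0)
    (hs : Tendsto (fun x => (∑ i ∈ Finset.range (k + 1), (c i).eval x * g i x)
      / (-Real.log (x - 1))) (𝓝[>] 1) (𝓝 0)) : False := by
  obtain ⟨hp, ha, c₁, hc₁, hlow⟩ := log_growth hμ (hg k) (hg (k + 1)) ode hx₁ hpos hneg
  have hev : ∀ᶠ x in 𝓝[>] (1 : ℝ), x ∈ Ioc 1 x₁ := Ioc_mem_nhdsGT hx₁
  -- `h ≥ (c₁ / 2) log (1 / (x - 1))` near `1`
  have hlow' : ∀ᶠ x in 𝓝[>] (1 : ℝ), c₁ / 2 * (-Real.log (x - 1)) ≤ g k x := by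
    filter_upwards [hev, tendsto_log_atTop.eventually_ge_atTop (-2 * Real.log (x₁ - 1))]
      with x hx hl
    have := hlow x hx
    nlinarith
  have htop : Tendsto (g k) (𝓝[>] 1) atTop :=
    tendsto_atTop_mono' _ hlow' (tendsto_log_atTop.const_mul_atTop (by positivity))
  have hsmall : ∀ j, j ≤ k → ∃ K, ∀ x ∈ Ioc 1 x₁, |g (k - j) x| ≤ K * g k x := by
    intro j
    induction j with
    | zero =>
      intro _
      exact ⟨1, fun x hx => by simp [abs_of_pos (hp x hx)]⟩
    | succ j ih =>
      intro hj
      obtain ⟨K, hK⟩ := ih (by omega)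
      have h1 : k - j = k - (j + 1) + 1 := by omega
      rw [h1] at hK
      exact (primitive_small hx₁ (hg (k - (j + 1))) hp ha hK).1
  have hlit : ∀ i, i < k → Tendsto (fun x => g i x / g k x) (𝓝[>] 1) (𝓝 0) := by
    intro i hi
    obtain ⟨K, hK⟩ := hsmall (k - (i + 1)) (by omega)
    have h1 : k - (k - (i + 1)) = i + 1 := by omega
    rw [h1] at hK
    exact (primitive_small hx₁ (hg i) hp ha hK).2 htop
  have hct : ∀ i, Tendsto (fun x => (c i).eval x) (𝓝[>] 1) (𝓝 ((c i).eval 1)) := fun i =>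
    ((c i).continuous.tendsto 1).mono_left nhdsWithin_le_nhds
  have hlim1 : Tendsto (fun x => (∑ i ∈ Finset.range k, (c i).eval x * (g i x / g k x))
      + (c k).eval x) (𝓝[>] 1) (𝓝 ((c k).eval 1)) := by
    have h1 : Tendsto (fun x => ∑ i ∈ Finset.range k, (c i).eval x * (g i x / g k x)) (𝓝[>] 1)
        (𝓝 (∑ i ∈ Finset.range k, (c i).eval 1 * 0)) :=
      tendsto_finsetSum _ fun i hi => (hct i).mul (hlit i (Finset.mem_range.1 hi))
    simpa using h1.add (hct k)
  have hlim2 : Tendsto (fun x => (∑ i ∈ Finset.range k, (c i).eval x * (g i x / g k x))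
      + (c k).eval x) (𝓝[>] 1) (𝓝 0) := by
    have hb : Tendsto (fun x => |(∑ i ∈ Finset.range (k + 1), (c i).eval x * g i x)
        / (-Real.log (x - 1))| * (2 / c₁)) (𝓝[>] 1) (𝓝 0) := by
      simpa using hs.abs.mul_const (2 / c₁)
    refine squeeze_zero_norm' ?_ hb
    filter_upwards [hev, hlow', tendsto_log_atTop.eventually_gt_atTop 0] with x hx h1 h2
    have hpx := hp x hx
    have heq : (∑ i ∈ Finset.range k, (c i).eval x * (g i x / g k x)) + (c k).eval x
        = (∑ i ∈ Finset.range (k + 1), (c i).eval x * g i x) / g k x := by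
      rw [Finset.sum_range_succ, add_div, Finset.sum_div]
      congr 1
      · exact Finset.sum_congr rfl fun i _ => by rw [mul_div_assoc]
      · field_simp
    rw [heq, norm_div, Real.norm_eq_abs, Real.norm_eq_abs, abs_div, abs_of_pos hpx, abs_of_pos h2,
      div_mul_div_comm, div_le_div_iff₀ hpx (by positivity)]
    have := mul_le_mul_of_nonneg_left h1
      (abs_nonneg (∑ i ∈ Finset.range (k + 1), (c i).eval x * g i x))
    nlinarith
  exact hc (tendsto_nhds_unique hlim1 hlim2)

/-- A solution of the radial equation, bounded near `∞`, for which a suitable combination of its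
derivatives is `o(log (1 / (x - 1)))` at `1`, is constant. -/
theorem radial_const {g : ℕ → ℝ → ℝ} (hg : DerivSeq g) {k : ℕ} (hk : 1 ≤ k) {lam : ℝ}
    (hlam : 0 ≤ lam) (hode : RadialODE (2 * k - 1) lam g) {C : ℝ}
    (hbdd : ∀ᶠ x in atTop, |g 0 x| ≤ C)
    (c : ℕ → Polynomial ℝ) (hc : (c k).eval 1 ≠ 0)
    (hs : Tendsto (fun x => (∑ i ∈ Finset.range (k + 1), (c i).eval x * g i x)
      / (-Real.log (x - 1))) (𝓝[>] 1) (𝓝 0)) :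
    ∃ a, ∀ x, 1 < x → g 0 x = a := by
  have hkk : (1 : ℝ) ≤ k := by exact_mod_cast hk
  set μ := lam + k * ((2 * k - 1) - k : ℝ) with hμdef
  have hμ : 0 ≤ μ := by
    have : 0 ≤ (k : ℝ) * ((2 * k - 1) - k : ℝ) := mul_nonneg (by linarith) (by linarith)
    linarith
  have ode : ∀ x, 1 < x → (x ^ 2 - 1) * g (k + 2) x + 2 * x * g (k + 1) x = μ * g k x := by
    intro x hx
    have := hode.iter hg k x hx
    rw [← this]; ring
  obtain ⟨j, rfl⟩ : ∃ j, k = j + 1 := ⟨k - 1, by omega⟩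
  refine hg.const_of_zero hbdd j (hg.zero_of_nonneg hbdd j fun x hx => ?_)
  by_contra hcon
  push Not at hcon
  rcases lt_trichotomy (g (j + 1) x) 0 with h0 | h0 | h0
  · refine no_singular hg.neg hμ (k := j + 1) (x₁ := x) ?_ hx (neg_pos.2 h0) ?_ c hc ?_
    · intro y hy
      have := ode y hy
      linarith
    · have := pos_of_mul_neg_right hcon h0.le
      simpa using this
    · simpa [mul_neg, Finset.sum_neg_distrib, neg_div] using hs.neg
  · simp [h0] at hcon
  · exact no_singular hg hμ (k := j + 1) ode hx h0 (neg_of_mul_neg_right hcon h0.le) c hc hs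


/-! ### Passing from the radius `r` to `x = (r + 1/r)/2` -/

/-- The coordinate `x = (r + 1/r)/2`, i.e. `cosh` of `-log r`. -/
def xi (r : ℝ) : ℝ := (r + r⁻¹) / 2

/-- The inverse of `xi`, from `(1, ∞)` to `(0, 1)`. -/
def rho (x : ℝ) : ℝ := x - √(x ^ 2 - 1)

theorem one_lt_xi {r : ℝ} (h0 : 0 < r) (h1 : r < 1) : 1 < xi r := by
  have : xi r - 1 = (1 - r) ^ 2 / (2 * r) := by unfold xi; field_simp; ring
  have h2 : 0 < (1 - r) ^ 2 / (2 * r) := by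
    have : 0 < 1 - r := by linarith
    positivity
  linarith

theorem xi_sub_one {r : ℝ} (h0 : 0 < r) : xi r - 1 = (1 - r) ^ 2 / (2 * r) := by
  unfold xi; field_simp; ring

theorem rho_xi {r : ℝ} (h0 : 0 < r) (h1 : r < 1) : rho (xi r) = r := by
  have h2 : xi r ^ 2 - 1 = ((r⁻¹ - r) / 2) ^ 2 := by unfold xi; field_simp; ring
  have h3 : 1 < r⁻¹ := (one_lt_inv₀ h0).2 h1
  rw [rho, h2, Real.sqrt_sq (by linarith), xi]; ring

theorem rho_pos {x : ℝ} (hx : 1 < x) : 0 < rho x := by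
  rw [rho, sub_pos, Real.sqrt_lt' (by linarith)]; linarith

theorem rho_mul {x : ℝ} (hx : 1 < x) : rho x * (x + √(x ^ 2 - 1)) = 1 := by
  have := Real.sq_sqrt (show 0 ≤ x ^ 2 - 1 by nlinarith)
  unfold rho; nlinarith

theorem rho_lt_inv {x : ℝ} (hx : 1 < x) : rho x < x⁻¹ := by
  have h1 := rho_mul hx
  have h2 : 0 < √(x ^ 2 - 1) := Real.sqrt_pos.2 (by nlinarith)
  have h3 := rho_pos hx
  rw [lt_inv_comm₀ h3 (by linarith), inv_eq_of_mul_eq_one_right h1]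
  linarith

theorem rho_lt_one {x : ℝ} (hx : 1 < x) : rho x < 1 :=
  (rho_lt_inv hx).trans (inv_lt_one_of_one_lt₀ hx)

theorem xi_rho {x : ℝ} (hx : 1 < x) : xi (rho x) = x := by
  rw [xi, inv_eq_of_mul_eq_one_right (rho_mul hx), rho]; ring

theorem tendsto_rho_atTop : Tendsto rho atTop (𝓝[>] 0) := by
  refine tendsto_nhdsWithin_iff.2 ⟨?_, ?_⟩
  · refine squeeze_zero' ?_ ?_ tendsto_inv_atTop_zero
    · filter_upwards [eventually_gt_atTop 1] with x hx using (rho_pos hx).le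
    · filter_upwards [eventually_gt_atTop 1] with x hx using (rho_lt_inv hx).le
  · filter_upwards [eventually_gt_atTop 1] with x hx using rho_pos hx

theorem tendsto_rho_one : Tendsto rho (𝓝[>] 1) (𝓝[<] 1) := by
  refine tendsto_nhdsWithin_iff.2 ⟨?_, ?_⟩
  · have : Continuous rho := by unfold rho; fun_prop
    have h := (this.tendsto 1).mono_left (nhdsWithin_le_nhds (s := Ioi 1))
    simpa [rho] using h
  · filter_upwards [self_mem_nhdsWithin] with x hx using rho_lt_one hx

theorem contDiffOn_rho : ContDiffOn ℝ ∞ rho (Ioi 1) := by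
  have h : ContDiffOn ℝ ∞ (fun x : ℝ => x ^ 2 - 1) (Ioi 1) := by fun_prop
  exact contDiffOn_id.sub (h.sqrt fun x hx => by
    have : (1 : ℝ) < x := hx
    nlinarith)

theorem hasDerivAt_xi {r : ℝ} (h0 : 0 < r) : HasDerivAt xi ((r - r⁻¹) / 2 / r) r := by
  refine (((hasDerivAt_id r).add (hasDerivAt_inv h0.ne')).div_const 2).congr_deriv ?_
  field_simp
  ring

/-- Near the boundary `log (1 / (1 - r))` is at most `log (1 / (x - 1))`. -/
theorem log_compare {r : ℝ} (h0 : 1 / 2 < r) (h1 : r < 1) :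
    0 < Real.log (1 / (1 - r)) ∧ Real.log (1 / (1 - r)) ≤ -Real.log (xi r - 1) := by
  have h2 : 0 < 1 - r := by linarith
  constructor
  · apply Real.log_pos
    rw [lt_div_iff₀ h2]; linarith
  · rw [xi_sub_one (by linarith), one_div, Real.log_inv, neg_le_neg_iff]
    apply Real.log_le_log
    · positivity
    · rw [div_le_iff₀ (by linarith)]; nlinarith

/-- `N = r d/dr` in the coordinate `x`: `N² = (x² - 1) d²/dx² + x d/dx`. -/
theorem step_sq {A B D Ψ Ψ1 Ψ2 : ℝ → ℝ}
    (hA : ∀ r ∈ Ioo (0 : ℝ) 1, HasDerivAt A (B r / r) r)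
    (hB : ∀ r ∈ Ioo (0 : ℝ) 1, HasDerivAt B (D r / r) r)
    (h1 : ∀ x, 1 < x → HasDerivAt Ψ (Ψ1 x) x) (h2 : ∀ x, 1 < x → HasDerivAt Ψ1 (Ψ2 x) x)
    (hAΨ : ∀ r ∈ Ioo (0 : ℝ) 1, A r = Ψ (xi r)) :
    ∀ r ∈ Ioo (0 : ℝ) 1, B r = (r - r⁻¹) / 2 * Ψ1 (xi r) ∧
      D r = (xi r ^ 2 - 1) * Ψ2 (xi r) + xi r * Ψ1 (xi r) := by
  have hB' : ∀ r ∈ Ioo (0 : ℝ) 1, B r = (r - r⁻¹) / 2 * Ψ1 (xi r) := by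
    intro r hr
    have e1 : HasDerivAt (fun s => Ψ (xi s)) (Ψ1 (xi r) * ((r - r⁻¹) / 2 / r)) r :=
      (h1 _ (one_lt_xi hr.1 hr.2)).comp r (hasDerivAt_xi hr.1)
    have e2 : A =ᶠ[𝓝 r] fun s => Ψ (xi s) := by
      filter_upwards [Ioo_mem_nhds hr.1 hr.2] with s hs using hAΨ s hs
    have e3 := (hA r hr).unique (e1.congr_of_eventuallyEq e2)
    have := hr.1.ne'
    rw [div_eq_iff this] at e3
    rw [e3]; field_simp
  refine fun r hr => ⟨hB' r hr, ?_⟩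
  have h0 := hr.1.ne'
  have e0 : HasDerivAt (fun s : ℝ => (s - s⁻¹) / 2) ((r + r⁻¹) / 2 / r) r := by
    refine (((hasDerivAt_id r).sub (hasDerivAt_inv h0)).div_const 2).congr_deriv ?_
    field_simp; ring
  have e1 : HasDerivAt (fun s => (s - s⁻¹) / 2 * Ψ1 (xi s))
      ((r + r⁻¹) / 2 / r * Ψ1 (xi r) + (r - r⁻¹) / 2 * (Ψ2 (xi r) * ((r - r⁻¹) / 2 / r))) r :=
    e0.mul ((h2 _ (one_lt_xi hr.1 hr.2)).comp r (hasDerivAt_xi hr.1))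
  have e2 : B =ᶠ[𝓝 r] fun s => (s - s⁻¹) / 2 * Ψ1 (xi s) := by
    filter_upwards [Ioo_mem_nhds hr.1 hr.2] with s hs using hB' s hs
  have e3 := (hB r hr).unique (e1.congr_of_eventuallyEq e2)
  rw [div_eq_iff h0] at e3
  rw [e3]
  have e4 : xi r ^ 2 - 1 = ((r - r⁻¹) / 2) ^ 2 := by unfold xi; field_simp; ring
  rw [e4]
  unfold xi
  field_simp
  ring

/-- On solutions of the radial equation, `N^{2j}` is a combination of the first `j` derivatives in
`x`, with polynomial coefficients; the top one does not vanish at `x = 1` when `m` is odd, because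
it is `∏_{i<j} (m - 2 i)` there. -/
theorem even_power {W : ℕ → ℝ → ℝ} {g : ℕ → ℝ → ℝ} {m lam : ℝ}
    (hW : ∀ j, ∀ r ∈ Ioo (0 : ℝ) 1, HasDerivAt (W j) (W (j + 1) r / r) r)
    (hg : DerivSeq g) (hode : RadialODE m lam g) (h0 : ∀ r ∈ Ioo (0 : ℝ) 1, W 0 r = g 0 (xi r))
    (hm : ∀ i : ℕ, m ≠ 2 * i) (j : ℕ) :
    ∃ c : ℕ → Polynomial ℝ, (c j).eval 1 ≠ 0 ∧ ∀ r ∈ Ioo (0 : ℝ) 1,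
      W (2 * j) r = ∑ i ∈ Finset.range (j + 1), (c i).eval (xi r) * g i (xi r) := by
  induction j with
  | zero => exact ⟨fun _ => 1, by simp, fun r hr => by simpa using h0 r hr⟩
  | succ j ih =>
    obtain ⟨c, hc, hcW⟩ := ih
    have hpd : ∀ (p : Polynomial ℝ) (x : ℝ), HasDerivAt (fun y => p.eval y)
        (p.derivative.eval x) x := fun p x => p.hasDerivAt x
    have h1 : ∀ x : ℝ, 1 < x → HasDerivAt
        (fun y => ∑ i ∈ Finset.range (j + 1), (c i).eval y * g i y)
        (∑ i ∈ Finset.range (j + 1),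
          ((c i).derivative.eval x * g i x + (c i).eval x * g (i + 1) x)) x := fun x hx =>
      HasDerivAt.fun_sum fun i _ => (hpd (c i) x).mul (hg i x hx)
    have h2 : ∀ x : ℝ, 1 < x → HasDerivAt
        (fun x => ∑ i ∈ Finset.range (j + 1),
          ((c i).derivative.eval x * g i x + (c i).eval x * g (i + 1) x))
        (∑ i ∈ Finset.range (j + 1),
          (((c i).derivative.derivative.eval x * g i x + (c i).derivative.eval x * g (i + 1) x) +
          ((c i).derivative.eval x * g (i + 1) x + (c i).eval x * g (i + 2) x))) x := fun x hx =>
      HasDerivAt.fun_sum fun i _ => ((hpd (c i).derivative x).mul (hg i x hx)).add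
        ((hpd (c i) x).mul (hg (i + 1) x hx))
    have hst := step_sq (hW (2 * j)) (hW (2 * j + 1)) h1 h2 hcW
    let A : ℕ → Polynomial ℝ := fun i => (Polynomial.X ^ 2 - 1) * (c i).derivative.derivative
      + Polynomial.X * (c i).derivative + Polynomial.C (lam + i * (m - i)) * c i
    let B : ℕ → Polynomial ℝ := fun i => 2 * (Polynomial.X ^ 2 - 1) * (c i).derivative
      + Polynomial.C (m - 2 * i) * Polynomial.X * c i
    refine ⟨fun i => (if i < j + 1 then A i else 0) + Nat.casesOn i 0 B, ?_, ?_⟩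
    · have hBe : (B j).eval 1 = (m - 2 * j) * (c j).eval 1 := by simp [B]
      simp only [lt_irrefl, if_false, zero_add]
      rw [hBe]
      exact mul_ne_zero (sub_ne_zero.2 (hm j)) hc
    · intro r hr
      have hx := one_lt_xi hr.1 hr.2
      rw [show 2 * (j + 1) = 2 * j + 1 + 1 by ring, (hst r hr).2]
      set x := xi r
      have hAB : ∀ i, (x ^ 2 - 1) *
          (((c i).derivative.derivative.eval x * g i x + (c i).derivative.eval x * g (i + 1) x) +
          ((c i).derivative.eval x * g (i + 1) x + (c i).eval x * g (i + 2) x))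
          + x * ((c i).derivative.eval x * g i x + (c i).eval x * g (i + 1) x)
          = (A i).eval x * g i x + (B i).eval x * g (i + 1) x := by
        intro i
        have e := hode.iter hg i x hx
        simp only [A, B, Polynomial.eval_add, Polynomial.eval_mul, Polynomial.eval_sub,
          Polynomial.eval_pow, Polynomial.eval_X, Polynomial.eval_one, Polynomial.eval_C,
          Polynomial.eval_ofNat]
        linear_combination ((c i).eval x) * e
      rw [Finset.mul_sum, Finset.mul_sum, ← Finset.sum_add_distrib,
        Finset.sum_congr rfl fun i _ => hAB i, Finset.sum_add_distrib]
      simp only [Polynomial.eval_add, add_mul, Finset.sum_add_distrib]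
      congr 1
      · rw [Finset.sum_range_succ _ (j + 1)]
        simp only [lt_irrefl, if_false, Polynomial.eval_zero, zero_mul, add_zero]
        exact Finset.sum_congr rfl fun i hi => by rw [if_pos (Finset.mem_range.1 hi)]
      · rw [Finset.sum_range_succ' _ (j + 1)]
        simp

theorem contDiffOn_of_chain {W : ℕ → ℝ → ℝ}
    (hW : ∀ j, ∀ r ∈ Ioo (0 : ℝ) 1, HasDerivAt (W j) (W (j + 1) r / r) r) :
    ContDiffOn ℝ ∞ (W 0) (Ioo 0 1) := by
  have key : ∀ m : ℕ, ∀ j, ContDiffOn ℝ m (W j) (Ioo 0 1) := by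
    intro m
    induction m with
    | zero =>
      intro j
      rw [Nat.cast_zero, contDiffOn_zero]
      exact fun r hr => (hW j r hr).continuousAt.continuousWithinAt
    | succ m ih =>
      intro j
      rw [show ((m + 1 : ℕ) : WithTop ℕ∞) = (m : WithTop ℕ∞) + 1 by push_cast; rfl,
        contDiffOn_succ_iff_deriv_of_isOpen isOpen_Ioo]
      refine ⟨fun r hr => (hW j r hr).differentiableAt.differentiableWithinAt, by simp, ?_⟩
      refine ((ih (j + 1)).div contDiffOn_id fun r hr => hr.1.ne').congr fun r hr => ?_
      exact (hW j r hr).deriv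
  exact contDiffOn_infty.2 fun m => key m 0

theorem derivSeq_of_contDiffOn {φ : ℝ → ℝ} (h : ContDiffOn ℝ ∞ φ (Ioi 1)) :
    DerivSeq fun i => deriv^[i] φ := by
  have key : ∀ i, ContDiffOn ℝ ∞ (deriv^[i] φ) (Ioi 1) := by
    intro i
    induction i with
    | zero => exact h
    | succ i ih =>
      rw [Function.iterate_succ_apply']
      exact ((contDiffOn_infty_iff_deriv_of_isOpen isOpen_Ioi).1 ih).2
  intro i x hx
  simp only [Function.iterate_succ_apply']
  exact (((key i).differentiableOn (by simp)).differentiableAt (Ioi_mem_nhds hx)).hasDerivAt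

/-- The radial statement: `W j` is the `j`-th power of `N = r d/dr` applied to the pairing `W 0` of
`u(r ·)` with a spherical eigenfunction. If `W (n - 1) = o(log (1 / (1 - r)))` then `W 0` is
constant. -/
theorem chain_const {W : ℕ → ℝ → ℝ} {k : ℕ} (hk : 1 ≤ k) {lam a : ℝ} (hlam : 0 ≤ lam)
    (hW : ∀ j, ∀ r ∈ Ioo (0 : ℝ) 1, HasDerivAt (W j) (W (j + 1) r / r) r)
    (hode : ∀ r ∈ Ioo (0 : ℝ) 1, (1 - r ^ 2) * (W 2 r + (2 * k - 1) * W 1 r - lam * W 0 r)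
      + 2 * (2 * k - 1) * r ^ 2 * W 1 r = 0)
    (ha : Tendsto (W 0) (𝓝[>] 0) (𝓝 a))
    (hs : Tendsto (fun r => W (2 * k) r / Real.log (1 / (1 - r))) (𝓝[<] 1) (𝓝 0)) :
    ∀ r ∈ Ioo (0 : ℝ) 1, W 0 r = a := by
  set φ : ℝ → ℝ := fun x => W 0 (rho x) with hφ
  have hφs : ContDiffOn ℝ ∞ φ (Ioi 1) :=
    (contDiffOn_of_chain hW).comp contDiffOn_rho fun x hx => ⟨rho_pos hx, rho_lt_one hx⟩
  set g : ℕ → ℝ → ℝ := fun i => deriv^[i] φ with hgdef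
  have hg : DerivSeq g := derivSeq_of_contDiffOn hφs
  have h0 : ∀ r ∈ Ioo (0 : ℝ) 1, W 0 r = g 0 (xi r) := fun r hr => by
    simp [hgdef, hφ, rho_xi hr.1 hr.2]
  have hst := step_sq (hW 0) (hW 1) (hg 0) (hg 1) h0
  have hrad : RadialODE (2 * k - 1) lam g := by
    intro x hx
    set r := rho x with hr
    have hrI : r ∈ Ioo (0 : ℝ) 1 := ⟨rho_pos hx, rho_lt_one hx⟩
    have hxr : xi r = x := xi_rho hx
    have e := hode r hrI
    obtain ⟨e1, e2⟩ := hst r hrI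
    simp only [zero_add, one_add_one_eq_two] at e1 e2
    rw [e1, e2, h0 r hrI, hxr] at e
    have hr0 := hrI.1.ne'
    have hr1 : 0 < 1 - r ^ 2 := by nlinarith [hrI.1, hrI.2]
    have hx2 : x = (r + r⁻¹) / 2 := hxr.symm
    have e3 : (1 - r ^ 2) * ((r - r⁻¹) / 2) + 2 * r ^ 2 * ((r - r⁻¹) / 2) = -(1 - r ^ 2) * x := by
      rw [hx2]; field_simp; ring
    apply mul_left_cancel₀ hr1.ne'
    linear_combination e - (2 * (k : ℝ) - 1) * g 1 x * e3
  have hm : ∀ i : ℕ, (2 * (k : ℝ) - 1) ≠ 2 * i := by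
    intro i h
    have : (2 * k : ℝ) = 2 * i + 1 := by linarith
    have : 2 * k = 2 * i + 1 := by exact_mod_cast this
    omega
  obtain ⟨c, hc, hcW⟩ := even_power hW hg hrad h0 hm k
  have hφa : Tendsto (g 0) atTop (𝓝 a) := ha.comp tendsto_rho_atTop
  have hbdd : ∀ᶠ x in atTop, |g 0 x| ≤ |a| + 1 := by
    have := hφa.abs
    exact (this.eventually_lt_const (by linarith : |a| < |a| + 1)).mono fun x hx => hx.le
  have hs' : Tendsto (fun x => (∑ i ∈ Finset.range (k + 1), (c i).eval x * g i x)
      / (-Real.log (x - 1))) (𝓝[>] 1) (𝓝 0) := by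
    have h1 := (hs.comp tendsto_rho_one).norm
    rw [norm_zero] at h1
    refine squeeze_zero_norm' ?_ h1
    have hev : ∀ᶠ x in 𝓝[>] (1 : ℝ), rho x ∈ Ioo (1 / 2) 1 :=
      tendsto_rho_one (Ioo_mem_nhdsLT (by norm_num))
    filter_upwards [hev, self_mem_nhdsWithin] with x hx hx1
    have hx1 : 1 < x := hx1
    have hrI : rho x ∈ Ioo (0 : ℝ) 1 := ⟨rho_pos hx1, rho_lt_one hx1⟩
    obtain ⟨l1, l2⟩ := log_compare hx.1 hx.2
    have e := hcW _ hrI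
    rw [xi_rho hx1] at e l2
    simp only [Function.comp]
    rw [← e, norm_div, norm_div, Real.norm_of_nonneg l1.le, Real.norm_of_nonneg (l1.le.trans l2)]
    exact div_le_div_of_nonneg_left (norm_nonneg _) l1 l2
  obtain ⟨b, hb⟩ := radial_const hg hk hlam hrad hbdd c hc hs'
  have hba : b = a := by
    refine tendsto_nhds_unique (tendsto_const_nhds.congr' ?_) hφa
    filter_upwards [eventually_gt_atTop 1] with x hx using (hb x hx).symm
  intro r hr
  rw [h0 r hr, hb _ (one_lt_xi hr.1 hr.2), hba]


/-! ### The normalized surface measure -/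

section Sphere

open scoped InnerProductSpace

theorem finrank_perp {n : ℕ} (hn : 1 ≤ n) {ζ : E n} (hζ : ‖ζ‖ = 1) :
    ((Module.finrank ℝ (ℝ ∙ ζ)ᗮ : ℕ) : ℝ) = (n : ℝ) - 1 := by
  have : Fact (Module.finrank ℝ (E n) = (n - 1) + 1) := ⟨by simp; omega⟩
  rw [Submodule.finrank_orthogonal_span_singleton (n := n - 1) (fun h => by simp [h] at hζ),
    Nat.cast_sub hn, Nat.cast_one]

theorem norm_sq_graph {n : ℕ} {ζ : E n} (hζ : ‖ζ‖ = 1) (w : (ℝ ∙ ζ)ᗮ) (a : ℝ) :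
    ‖(w : E n) + a • ζ‖ ^ 2 = ‖w‖ ^ 2 + a ^ 2 := by
  have : ⟪(w : E n), ζ⟫_ℝ = 0 := by
    rw [real_inner_comm]
    exact (Submodule.mem_orthogonal_singleton_iff_inner_right.1 w.2)
  rw [norm_add_sq_real, inner_smul_right, this, norm_smul, hζ]
  simp

theorem exists_graph {n : ℕ} {ζ : E n} (hζ : ‖ζ‖ = 1) (x : E n) :
    x = (((ℝ ∙ ζ)ᗮ.orthogonalProjectionOnto x : (ℝ ∙ ζ)ᗮ) : E n) + ⟪ζ, x⟫_ℝ • ζ := by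
  have h1 := Submodule.starProjection_add_starProjection_orthogonal (K := (ℝ ∙ ζ)) x
  rw [Submodule.starProjection_unit_singleton ℝ hζ] at h1
  rw [add_comm]
  exact h1.symm

theorem proj_graph {n : ℕ} {ζ : E n} (w : (ℝ ∙ ζ)ᗮ) (a : ℝ) :
    (ℝ ∙ ζ)ᗮ.orthogonalProjectionOnto ((w : E n) + a • ζ) = w := by
  rw [map_add, Submodule.orthogonalProjectionOnto_mem_subspace_eq_self, map_smul]
  have : (ℝ ∙ ζ)ᗮ.orthogonalProjectionOnto ζ = 0 :=
    Submodule.orthogonalProjectionOnto_orthogonal_apply_eq_zero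
      (Submodule.mem_span_singleton_self ζ)
  rw [this]; simp

/-- Locally the sphere is a Lipschitz graph over a hyperplane, so its Hausdorff measure is
finite. -/
theorem sphere_lt_top {n : ℕ} (hn : 1 ≤ n) :
    μH[(n : ℝ) - 1] (sphere (0 : E n) 1) < ⊤ := by
  refine (isCompact_sphere (0 : E n) 1).measure_lt_top_of_nhdsWithin fun ζ hζ => ?_
  have hζ1 : ‖ζ‖ = 1 := by simpa using hζ
  let K := (ℝ ∙ ζ)ᗮ
  let f : K → E n := fun w => (w : E n) + √(1 - ‖w‖ ^ 2) • ζ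
  have hf : ContDiffAt ℝ 1 f 0 := by
    have h1 : ContDiffAt ℝ 1 (fun w : K => (w : E n)) 0 := K.subtypeL.contDiff.contDiffAt
    have h2 : ContDiffAt ℝ 1 (fun w : K => √(1 - ‖w‖ ^ 2)) 0 := by
      refine ContDiffAt.sqrt ?_ (by simp)
      exact contDiffAt_const.sub (contDiff_norm_sq ℝ).contDiffAt
    exact h1.add (h2.smul contDiffAt_const)
  obtain ⟨C, t, ht, hL⟩ := hf.exists_lipschitzOnWith
  let s : Set K := t ∩ closedBall 0 1
  have hs : s ∈ 𝓝 (0 : K) := inter_mem ht (closedBall_mem_nhds _ one_pos)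
  have hP : Continuous (fun x : E n => K.orthogonalProjectionOnto x) := by fun_prop
  refine ⟨f '' s, ?_, ?_⟩
  · have hP0 : K.orthogonalProjectionOnto ζ = 0 :=
      Submodule.orthogonalProjectionOnto_orthogonal_apply_eq_zero
        (Submodule.mem_span_singleton_self ζ)
    have e1 : {x : E n | K.orthogonalProjectionOnto x ∈ s} ∈ 𝓝 ζ :=
      hP.continuousAt (by rwa [hP0])
    have e2 : {x : E n | 0 < ⟪ζ, x⟫_ℝ} ∈ 𝓝 ζ := by
      refine IsOpen.mem_nhds (isOpen_lt continuous_const (by fun_prop)) ?_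
      simp [hζ1]
    filter_upwards [mem_nhdsWithin_of_mem_nhds e1, mem_nhdsWithin_of_mem_nhds e2,
      self_mem_nhdsWithin] with x hx1 hx2 hx3
    refine ⟨_, hx1, ?_⟩
    have hx := exists_graph hζ1 x
    have hn1 := norm_sq_graph hζ1 (K.orthogonalProjectionOnto x) ⟪ζ, x⟫_ℝ
    rw [← hx, mem_sphere_zero_iff_norm.1 hx3] at hn1
    have : √(1 - ‖K.orthogonalProjectionOnto x‖ ^ 2) = ⟪ζ, x⟫_ℝ := by
      rw [show 1 - ‖K.orthogonalProjectionOnto x‖ ^ 2 = ⟪ζ, x⟫_ℝ ^ 2 by linarith]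
      exact Real.sqrt_sq (le_of_lt hx2)
    simp only [f]
    rw [this]
    exact hx.symm
  · have hd : (0 : ℝ) ≤ (n : ℝ) - 1 := by
      rw [← finrank_perp hn hζ1]; positivity
    refine ((hL.mono inter_subset_left).hausdorffMeasure_image_le hd).trans_lt ?_
    refine ENNReal.mul_lt_top (ENNReal.rpow_lt_top_of_nonneg hd ENNReal.coe_ne_top) ?_
    rw [← finrank_perp hn hζ1]
    exact (measure_mono inter_subset_right).trans_lt (isCompact_closedBall (0 : K) 1).measure_lt_top

/-- The sphere projects onto a ball of a hyperplane, so its Hausdorff measure is positive. -/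
theorem sphere_ne_zero {n : ℕ} (hn : 1 ≤ n) :
    μH[(n : ℝ) - 1] (sphere (0 : E n) 1) ≠ 0 := by
  intro h0
  have : NeZero n := ⟨by omega⟩
  let ζ : E n := EuclideanSpace.single 0 1
  have hζ1 : ‖ζ‖ = 1 := by simp [ζ]
  let K := (ℝ ∙ ζ)ᗮ
  have hd : (0 : ℝ) ≤ (n : ℝ) - 1 := by
    rw [← finrank_perp hn hζ1]; positivity
  have h1 := (K.lipschitzWith_orthogonalProjectionOnto).hausdorffMeasure_image_le hd
    (sphere (0 : E n) 1)
  rw [h0, mul_zero] at h1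
  have h2 : ball (0 : K) 1 ⊆ K.orthogonalProjectionOnto '' sphere (0 : E n) 1 := by
    intro w hw
    refine ⟨(w : E n) + √(1 - ‖w‖ ^ 2) • ζ, ?_, proj_graph w _⟩
    have hw1 : ‖w‖ < 1 := by simpa using hw
    have := norm_sq_graph hζ1 w √(1 - ‖w‖ ^ 2)
    rw [Real.sq_sqrt (by nlinarith [norm_nonneg w])] at this
    rw [mem_sphere_zero_iff_norm, ← sq_eq_sq₀ (norm_nonneg _) zero_le_one, this]
    ring
  have h3 : μH[(Module.finrank ℝ K : ℝ)] (ball (0 : K) 1) = 0 := by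
    have := finrank_perp hn hζ1
    rw [this]
    exact le_antisymm ((measure_mono h2).trans h1) bot_le
  exact (measure_ball_pos _ (0 : K) one_pos).ne' h3

theorem sph_prob {n : ℕ} (hn : 1 ≤ n) : IsProbabilityMeasure (sphMeasure n) :=
  ⟨by simp [sphMeasure, ENNReal.inv_mul_cancel (sphere_ne_zero hn) (sphere_lt_top hn).ne]⟩

theorem ae_sphere (n : ℕ) : ∀ᵐ ζ ∂(sphMeasure n), ζ ∈ sphere (0 : E n) 1 :=
  (Measure.smul_absolutelyContinuous).ae_le (ae_restrict_mem isClosed_sphere.measurableSet)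

theorem sph_integral_congr {n : ℕ} {f g : E n → ℝ} (h : ∀ ζ ∈ sphere (0 : E n) 1, f ζ = g ζ) :
    ∫ ζ, f ζ ∂(sphMeasure n) = ∫ ζ, g ζ ∂(sphMeasure n) :=
  integral_congr_ae ((ae_sphere n).mono fun ζ hζ => h ζ hζ)

theorem sph_invariant {n : ℕ} (R : E n ≃ₗᵢ[ℝ] E n) :
    MeasurePreserving R (sphMeasure n) (sphMeasure n) := by
  have h1 := (R.toIsometryEquiv.measurePreserving_hausdorffMeasure ((n : ℝ) - 1))
  have h2 := h1.restrict_preimage (s := sphere (0 : E n) 1) isClosed_sphere.measurableSet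
  have h3 : R.toIsometryEquiv ⁻¹' sphere (0 : E n) 1 = sphere (0 : E n) 1 := by
    ext x; simp
  rw [h3] at h2
  exact h2.smul_measure _

theorem sph_integral_comp {n : ℕ} (R : E n ≃ₗᵢ[ℝ] E n) (g : E n → ℝ) :
    ∫ ζ, g (R ζ) ∂(sphMeasure n) = ∫ ζ, g ζ ∂(sphMeasure n) :=
  (sph_invariant R).integral_comp R.toHomeomorph.measurableEmbedding g

theorem sph_ae_strong {n : ℕ} {f : E n → ℝ} (hf : ContinuousOn f (sphere (0 : E n) 1)) :
    AEStronglyMeasurable f (sphMeasure n) :=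
  (hf.aestronglyMeasurable isClosed_sphere.measurableSet).smul_measure _

theorem sph_integrable {n : ℕ} (hn : 1 ≤ n) {f : E n → ℝ}
    (hf : ContinuousOn f (sphere (0 : E n) 1)) : Integrable f (sphMeasure n) := by
  have := sph_prob hn
  obtain ⟨C, hC⟩ := (isCompact_sphere (0 : E n) 1).exists_bound_of_continuousOn hf
  exact Integrable.of_bound (sph_ae_strong hf) C ((ae_sphere n).mono hC)

/-- The surface measure charges every relatively open subset of the sphere: otherwise, by rotation
invariance, it would vanish locally. -/
theorem sph_ball_ne_zero {n : ℕ} (hn : 1 ≤ n) {ζ : E n} (hζ : ‖ζ‖ = 1) {ε : ℝ} (hε : 0 < ε) :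
    sphMeasure n (ball ζ ε) ≠ 0 := by
  intro h0
  have := sph_prob hn
  have h1 : sphMeasure n (sphere (0 : E n) 1) = 0 := by
    refine measure_null_of_locally_null _ fun x hx => ?_
    refine ⟨ball x ε, mem_nhdsWithin_of_mem_nhds (ball_mem_nhds x hε), ?_⟩
    have hx1 : ‖x‖ = ‖ζ‖ := by rw [hζ]; simpa using hx
    let R : E n ≃ₗᵢ[ℝ] E n := (ℝ ∙ (x - ζ))ᗮ.reflection
    have hR : R x = ζ := Submodule.reflection_sub hx1
    have h2 : R ⁻¹' ball ζ ε = ball x ε := by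
      rw [← hR]; exact R.toIsometryEquiv.preimage_ball _ _ |>.trans (by simp)
    rw [← h2, (sph_invariant R).measure_preimage isOpen_ball.measurableSet.nullMeasurableSet, h0]
  have h2 : sphMeasure n univ = 0 := by
    have h3 : (sphMeasure n) (sphere (0 : E n) 1)ᶜ = 0 := ae_sphere n
    rw [← union_compl_self (sphere (0 : E n) 1)]
    exact measure_union_null h1 h3
  simp at h2

theorem sph_eq_zero {n : ℕ} (hn : 1 ≤ n) {f : E n → ℝ}
    (hf : ContinuousOn f (sphere (0 : E n) 1)) (h0 : ∫ ζ, f ζ * f ζ ∂(sphMeasure n) = 0) :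
    ∀ ζ ∈ sphere (0 : E n) 1, f ζ = 0 := by
  intro ζ hζ
  have hζ1 : ‖ζ‖ = 1 := by simpa using hζ
  by_contra hne
  have h1 := (integral_eq_zero_iff_of_nonneg (fun x => mul_self_nonneg (f x))
    (sph_integrable hn (hf.mul hf))).1 h0
  have h2 : {x | f x ≠ 0} ∈ 𝓝[sphere (0 : E n) 1] ζ := (hf ζ hζ).eventually_ne hne
  obtain ⟨ε, hε, hsub⟩ := Metric.mem_nhdsWithin_iff.1 h2
  apply sph_ball_ne_zero hn hζ1 hε
  have h3 : ∀ᵐ x ∂(sphMeasure n), x ∉ ball ζ ε := by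
    filter_upwards [h1, ae_sphere n] with x hx1 hx2 hx3
    exact hsub ⟨hx3, hx2⟩ (mul_self_eq_zero.1 hx1)
  simpa only [not_not, ofPred_mem_eq] using ae_iff.1 h3

end Sphere

/-! ### Derivations along linear vector fields, and integration by parts on the sphere -/

section Parts

open scoped InnerProductSpace

/-- Differentiation under the integral sign, for integrals over the sphere. -/
theorem hasDerivAt_sph {n : ℕ} (hn : 1 ≤ n) {a b t₀ : ℝ} (ht₀ : t₀ ∈ Ioo a b)
    {G G' : ℝ → E n → ℝ} (hG : ∀ t ∈ Ioo a b, ContinuousOn (G t) (sphere (0 : E n) 1))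
    (hG' : ContinuousOn (fun p : ℝ × E n => G' p.1 p.2) (Ioo a b ×ˢ sphere (0 : E n) 1))
    (hd : ∀ t ∈ Ioo a b, ∀ ζ ∈ sphere (0 : E n) 1,
      HasDerivAt (fun s => G s ζ) (G' t ζ) t) :
    HasDerivAt (fun t => ∫ ζ, G t ζ ∂(sphMeasure n)) (∫ ζ, G' t₀ ζ ∂(sphMeasure n)) t₀ := by
  have := sph_prob hn
  obtain ⟨a', ha1, ha2⟩ := exists_between ht₀.1
  obtain ⟨b', hb1, hb2⟩ := exists_between ht₀.2
  have hsub : Icc a' b' ⊆ Ioo a b := fun t ht => ⟨ha1.trans_le ht.1, ht.2.trans_lt hb2⟩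
  have hK : IsCompact (Icc a' b' ×ˢ sphere (0 : E n) 1) :=
    isCompact_Icc.prod (isCompact_sphere (0 : E n) 1)
  obtain ⟨C, hC⟩ := hK.exists_bound_of_continuousOn
    (hG'.mono (prod_mono hsub Subset.rfl))
  have hnhd : Icc a' b' ∈ 𝓝 t₀ := Icc_mem_nhds ha2 hb1
  refine (hasDerivAt_integral_of_dominated_loc_of_deriv_le (bound := fun _ => C) hnhd
    ?_ (sph_integrable hn (hG t₀ ht₀)) ?_ ?_ (integrable_const C) ?_).2
  · filter_upwards [hnhd] with t ht
    exact sph_ae_strong (hG t (hsub ht))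
  · refine sph_ae_strong (hG'.comp (f := fun ζ : E n => ((t₀, ζ) : ℝ × E n)) (by fun_prop) ?_)
    exact fun ζ hζ => ⟨ht₀, hζ⟩
  · filter_upwards [ae_sphere n] with ζ hζ t ht
    exact hC (t, ζ) ⟨ht, hζ⟩
  · filter_upwards [ae_sphere n] with ζ hζ t ht
    exact hd t (hsub ht) ζ hζ

/-- The derivation `v ↦ Dv(x)(Ax)` along the linear vector field `x ↦ Ax`. -/
def linDer {n : ℕ} (A : E n →L[ℝ] E n) (v : E n → ℝ) (x : E n) : ℝ := fderiv ℝ v x (A x)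

theorem NOp_eq (n : ℕ) (v : E n → ℝ) : NOp n v = linDer (ContinuousLinearMap.id ℝ (E n)) v := rfl

theorem linDer_contDiffOn {n : ℕ} (A : E n →L[ℝ] E n) {v : E n → ℝ} {s : Set (E n)}
    (hs : IsOpen s) (hv : ContDiffOn ℝ ∞ v s) : ContDiffOn ℝ ∞ (linDer A v) s :=
  (hv.fderiv_of_isOpen hs (m := ∞) (by simp)).clm_apply A.contDiff.contDiffOn

theorem NOp_iter_contDiffOn {n : ℕ} {v : E n → ℝ} {s : Set (E n)}
    (hs : IsOpen s) (hv : ContDiffOn ℝ ∞ v s) (j : ℕ) : ContDiffOn ℝ ∞ ((NOp n)^[j] v) s := by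
  induction j with
  | zero => exact hv
  | succ j ih => rw [Function.iterate_succ_apply', NOp_eq]; exact linDer_contDiffOn _ hs ih

theorem smul_mem_ball {n : ℕ} {r : ℝ} (hr : r ∈ Ioo (-1 : ℝ) 1) {ζ : E n}
    (hζ : ζ ∈ sphere (0 : E n) 1) : r • ζ ∈ ball (0 : E n) 1 := by
  have : ‖ζ‖ = 1 := by simpa using hζ
  simp [norm_smul, this, abs_lt, hr.1, hr.2]

theorem hasDerivAt_radial {n : ℕ} (hn : 1 ≤ n) {v P : E n → ℝ}
    (hv : ContDiffOn ℝ ∞ v (ball (0 : E n) 1)) (hP : Continuous P) {r : ℝ}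
    (hr : r ∈ Ioo (-1 : ℝ) 1) :
    HasDerivAt (fun r => ∫ ζ, v (r • ζ) * P ζ ∂(sphMeasure n))
      (∫ ζ, fderiv ℝ v (r • ζ) ζ * P ζ ∂(sphMeasure n)) r := by
  have hmaps : MapsTo (fun p : ℝ × E n => p.1 • p.2) (Ioo (-1 : ℝ) 1 ×ˢ sphere (0 : E n) 1)
      (ball (0 : E n) 1) := fun p hp => smul_mem_ball hp.1 hp.2
  have hfd : ContinuousOn (fderiv ℝ v) (ball (0 : E n) 1) :=
    (hv.fderiv_of_isOpen isOpen_ball (m := ∞) (by simp)).continuousOn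
  refine hasDerivAt_sph (G := fun r ζ => v (r • ζ) * P ζ)
    (G' := fun r ζ => fderiv ℝ v (r • ζ) ζ * P ζ) hn hr ?_ ?_ ?_
  · intro t ht
    exact (hv.continuousOn.comp (by fun_prop) fun ζ hζ => smul_mem_ball ht hζ).mul hP.continuousOn
  · exact ((hfd.comp (by fun_prop) hmaps).clm_apply continuousOn_snd).mul
      (hP.comp continuous_snd).continuousOn
  · intro t ht ζ hζ
    have h1 := ((hv.contDiffAt (isOpen_ball.mem_nhds (smul_mem_ball ht hζ))).differentiableAt
      (by simp)).hasFDerivAt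
    have h2 : HasDerivAt (fun s : ℝ => s • ζ) ζ t := by simpa using (hasDerivAt_id t).smul_const ζ
    exact (h1.comp_hasDerivAt t h2).mul_const _

/-- `N` acts on radial pairings as `r d/dr`. -/
theorem radial_deriv {n : ℕ} (hn : 1 ≤ n) {v P : E n → ℝ}
    (hv : ContDiffOn ℝ ∞ v (ball (0 : E n) 1)) (hP : Continuous P) {r : ℝ}
    (hr : r ∈ Ioo (0 : ℝ) 1) :
    HasDerivAt (fun r => ∫ ζ, v (r • ζ) * P ζ ∂(sphMeasure n))
      ((∫ ζ, NOp n v (r • ζ) * P ζ ∂(sphMeasure n)) / r) r := by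
  have h := hasDerivAt_radial hn hv hP (r := r) ⟨by linarith [hr.1], hr.2⟩
  convert h using 1
  rw [div_eq_iff hr.1.ne', ← integral_mul_const]
  congr 1
  ext ζ
  simp only [NOp, map_smul, smul_eq_mul]
  ring

theorem radial_tendsto_zero {n : ℕ} (hn : 1 ≤ n) {v P : E n → ℝ}
    (hv : ContDiffOn ℝ ∞ v (ball (0 : E n) 1)) (hP : Continuous P) :
    Tendsto (fun r => ∫ ζ, v (r • ζ) * P ζ ∂(sphMeasure n)) (𝓝[>] (0 : ℝ))
      (𝓝 (v 0 * ∫ ζ, P ζ ∂(sphMeasure n))) := by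
  have h := (hasDerivAt_radial hn hv hP (r := 0) (by simp)).continuousAt.tendsto
  simp only [zero_smul, integral_const_mul] at h
  exact h.mono_left nhdsWithin_le_nhds

theorem exp_unitary {n : ℕ} {J : E n →L[ℝ] E n} (hJ : J ∈ skewAdjoint (E n →L[ℝ] E n)) (t : ℝ) :
    NormedSpace.exp (t • J) ∈ unitary (E n →L[ℝ] E n) := by
  let _ : NormedAlgebra ℚ (E n →L[ℝ] E n) := NormedAlgebra.restrictScalars ℚ ℝ _
  exact NormedSpace.exp_mem_unitary_of_mem_skewAdjoint (skewAdjoint.smul_mem t hJ)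

/-- Rotation invariance in infinitesimal form: a derivation along a rotation field has mean zero
on the sphere. -/
theorem integral_linDer_skew {n : ℕ} (hn : 1 ≤ n) {J : E n →L[ℝ] E n}
    (hJ : J ∈ skewAdjoint (E n →L[ℝ] E n)) {f : E n → ℝ} {s : Set (E n)} (hs : IsOpen s)
    (hss : sphere (0 : E n) 1 ⊆ s) (hf : ContDiffOn ℝ ∞ f s) :
    ∫ ζ, linDer J f ζ ∂(sphMeasure n) = 0 := by
  have hsk : ∀ t : ℝ, NormedSpace.exp (t • J) ∈ unitary (E n →L[ℝ] E n) := exp_unitary hJ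
  let R : ℝ → E n ≃ₗᵢ[ℝ] E n := fun t => Unitary.linearIsometryEquiv ⟨_, hsk t⟩
  have hR : ∀ t ζ, R t ζ = NormedSpace.exp (t • J) ζ := fun t ζ => rfl
  have hRs : ∀ t : ℝ, ∀ ζ ∈ sphere (0 : E n) 1, NormedSpace.exp (t • J) ζ ∈ sphere (0 : E n) 1 := by
    intro t ζ hζ
    rw [← hR]
    simpa using hζ
  have hexp : ∀ t : ℝ, HasDerivAt (fun t : ℝ => NormedSpace.exp (t • J))
      (J * NormedSpace.exp (t • J)) t := fun t => hasDerivAt_exp_smul_const' J t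
  have hcexp : Continuous (fun t : ℝ => NormedSpace.exp (t • J)) :=
    continuous_iff_continuousAt.2 fun t => (hexp t).continuousAt
  have hcont : Continuous (fun p : ℝ × E n => NormedSpace.exp (p.1 • J) p.2) :=
    (hcexp.comp continuous_fst).clm_apply continuous_snd
  have h1 := hasDerivAt_sph (a := -1) (b := 1) (t₀ := 0)
    (G := fun t ζ => f (NormedSpace.exp (t • J) ζ))
    (G' := fun t ζ => linDer J f (NormedSpace.exp (t • J) ζ)) hn (by simp) ?_ ?_ ?_
  · have h2 : (fun t : ℝ => ∫ ζ, f (NormedSpace.exp (t • J) ζ) ∂(sphMeasure n)) =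
        fun _ => ∫ ζ, f ζ ∂(sphMeasure n) := by
      ext t
      exact sph_integral_comp (R t) f
    rw [h2] at h1
    have h3 := h1.unique (hasDerivAt_const (0 : ℝ) _)
    have h4 : NormedSpace.exp ((0 : ℝ) • J) = 1 := by
      have h5 : (0 : ℝ) • J = 0 := zero_smul ℝ J
      rw [h5, NormedSpace.exp_zero]
    rw [h4] at h3
    exact h3
  · intro t _
    exact hf.continuousOn.comp (by fun_prop) fun ζ hζ => hss (hRs t ζ hζ)
  · exact (linDer_contDiffOn J hs hf).continuousOn.comp hcont.continuousOn
      fun p hp => hss (hRs p.1 p.2 hp.2)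
  · intro t _ ζ hζ
    have h1 := ((hf.contDiffAt (hs.mem_nhds (hss (hRs t ζ hζ)))).differentiableAt
      (by simp)).hasFDerivAt
    have h2 : HasDerivAt (fun s : ℝ => NormedSpace.exp (s • J) ζ)
        (J (NormedSpace.exp (t • J) ζ)) t := by
      have := (hexp t).clm_apply (hasDerivAt_const t ζ)
      simpa using this
    exact h1.comp_hasDerivAt t h2

/-- Integration by parts on the sphere of radius `r`: rotation derivations are skew for the pairing
with `σ`. -/
theorem parts_skew {n : ℕ} (hn : 1 ≤ n) {J : E n →L[ℝ] E n}
    (hJ : J ∈ skewAdjoint (E n →L[ℝ] E n)) {v P : E n → ℝ}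
    (hv : ContDiffOn ℝ ∞ v (ball (0 : E n) 1)) (hP : ContDiff ℝ ∞ P) {r : ℝ}
    (hr : r ∈ Ioo (0 : ℝ) 1) :
    ∫ ζ, linDer J v (r • ζ) * P ζ ∂(sphMeasure n) =
      -∫ ζ, v (r • ζ) * linDer J P ζ ∂(sphMeasure n) := by
  let s : Set (E n) := (fun x : E n => r • x) ⁻¹' ball (0 : E n) 1
  have hs : IsOpen s := isOpen_ball.preimage (by fun_prop)
  have hr' : r ∈ Ioo (-1 : ℝ) 1 := ⟨by linarith [hr.1], hr.2⟩
  have hss : sphere (0 : E n) 1 ⊆ s := fun ζ hζ => smul_mem_ball hr' hζ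
  have hvr : ContDiffOn ℝ ∞ (fun x : E n => v (r • x)) s :=
    hv.comp (contDiff_const_smul r).contDiffOn fun x hx => hx
  have h0 := integral_linDer_skew hn hJ hs hss (hvr.mul hP.contDiffOn)
  have h1 : ∀ ζ ∈ sphere (0 : E n) 1, linDer J (fun x => v (r • x) * P x) ζ =
      linDer J v (r • ζ) * P ζ + v (r • ζ) * linDer J P ζ := by
    intro ζ hζ
    have e1 := ((hv.contDiffAt (isOpen_ball.mem_nhds (smul_mem_ball hr' hζ))).differentiableAt
      (by simp)).hasFDerivAt
    have e2 : HasFDerivAt (fun x : E n => r • x) (r • ContinuousLinearMap.id ℝ (E n)) ζ :=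
      (hasFDerivAt_id ζ).const_smul r
    have e3 := (hP.differentiable (by simp) ζ).hasFDerivAt
    have e4 := (e1.comp ζ e2).mul e3
    unfold linDer
    rw [show (fun x => v (r • x) * P x) = (v ∘ fun x : E n => r • x) * P from rfl, e4.fderiv]
    simp
    ring
  have hc1 : ContinuousOn (fun ζ => linDer J v (r • ζ) * P ζ) (sphere (0 : E n) 1) :=
    ((linDer_contDiffOn J isOpen_ball hv).continuousOn.comp (by fun_prop)
      fun ζ hζ => smul_mem_ball hr' hζ).mul hP.continuous.continuousOn
  have hc2 : ContinuousOn (fun ζ => v (r • ζ) * linDer J P ζ) (sphere (0 : E n) 1) :=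
    (hvr.continuousOn.mono hss).mul
      ((linDer_contDiffOn J isOpen_univ hP.contDiffOn).continuousOn.mono (subset_univ _))
  have h2 := sph_integral_congr h1
  rw [integral_add (sph_integrable hn hc1) (sph_integrable hn hc2)] at h2
  have h3 : ∫ ζ, linDer J (fun x => v (r • x) * P x) ζ ∂(sphMeasure n) = 0 := h0
  linarith

end Parts

/-! ### The angular operators and the Laplacian in polar form -/

section Polar

open scoped InnerProductSpace

/-- The standard basis vector `e_i`. -/
abbrev eb (n : ℕ) (i : Fin n) : E n := EuclideanSpace.single i 1

/-- The rotation field `x ↦ x_i e_j - x_j e_i`. -/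
def rot (n : ℕ) (i j : Fin n) : E n →L[ℝ] E n :=
  (EuclideanSpace.proj i : E n →L[ℝ] ℝ).smulRight (eb n j) -
    (EuclideanSpace.proj j : E n →L[ℝ] ℝ).smulRight (eb n i)

theorem rot_apply {n : ℕ} (i j : Fin n) (x : E n) :
    rot n i j x = x i • eb n j - x j • eb n i := rfl

theorem rot_skew {n : ℕ} (i j : Fin n) : rot n i j ∈ skewAdjoint (E n →L[ℝ] E n) := by
  rw [skewAdjoint.mem_iff, ContinuousLinearMap.star_eq_adjoint, eq_comm,
    ContinuousLinearMap.eq_adjoint_iff]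
  intro x y
  simp only [neg_apply, rot_apply, inner_neg_left, inner_sub_left,
    inner_sub_right, inner_smul_left, inner_smul_right, eb, EuclideanSpace.inner_single_left,
    EuclideanSpace.inner_single_right]
  simp
  ring

/-- Second derivation along linear fields, in terms of the first two derivatives. -/
theorem linDer_linDer {n : ℕ} (A B : E n →L[ℝ] E n) {v : E n → ℝ} {s : Set (E n)}
    (hs : IsOpen s) (hv : ContDiffOn ℝ ∞ v s) {x : E n} (hx : x ∈ s) :
    linDer A (linDer B v) x =
      fderiv ℝ (fderiv ℝ v) x (A x) (B x) + fderiv ℝ v x (B (A x)) := by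
  have h1 : DifferentiableAt ℝ (fderiv ℝ v) x :=
    ((hv.fderiv_of_isOpen hs (m := ∞) (by simp)).contDiffAt (hs.mem_nhds hx)).differentiableAt
      (by simp)
  have h2 := h1.hasFDerivAt.clm_apply (B.hasFDerivAt (x := x))
  rw [linDer, show linDer B v = fun y => fderiv ℝ v y (B y) from rfl, h2.fderiv]
  simp [add_comm]

theorem lap_eq {n : ℕ} {v : E n → ℝ} {s : Set (E n)}
    (hs : IsOpen s) (hv : ContDiffOn ℝ ∞ v s) {x : E n} (hx : x ∈ s) :
    lap n v x = ∑ i, fderiv ℝ (fderiv ℝ v) x (eb n i) (eb n i) := by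
  have h1 : DifferentiableAt ℝ (fderiv ℝ v) x :=
    ((hv.fderiv_of_isOpen hs (m := ∞) (by simp)).contDiffAt (hs.mem_nhds hx)).differentiableAt
      (by simp)
  refine Finset.sum_congr rfl fun i _ => ?_
  have h2 := h1.hasFDerivAt.clm_apply (hasFDerivAt_const (eb n i) x)
  rw [h2.fderiv]
  simp

theorem sum_basis {n : ℕ} (x : E n) : ∑ i, x i • eb n i = x := by
  ext j
  simp [Finset.sum_apply, Pi.single_apply]

theorem sum_sq {n : ℕ} (x : E n) : ∑ i, x i * x i = ‖x‖ ^ 2 := by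
  rw [EuclideanSpace.real_norm_sq_eq]
  exact Finset.sum_congr rfl fun i _ => (sq _).symm

theorem sum_rot_rot {n : ℕ} (x : E n) :
    ∑ i, ∑ j, rot n i j (rot n i j x) = (2 - 2 * (n : ℝ)) • x := by
  have h : ∀ i j, rot n i j (rot n i j x) =
      (if i = j then (2 * x i) • eb n i else 0) - x i • eb n i - x j • eb n j := by
    intro i j
    simp only [rot_apply]
    by_cases hij : i = j
    · subst hij
      simp; module
    · simp [hij, Ne.symm hij]
      module
  simp only [h, Finset.sum_sub_distrib, Finset.sum_ite_eq, Finset.mem_univ, if_true,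
    Finset.sum_const, Finset.card_univ, Fintype.card_fin, mul_smul]
  rw [← Finset.smul_sum, ← Finset.smul_sum, sum_basis]
  module

theorem sum_bilin_rot {n : ℕ} (B : E n →L[ℝ] E n →L[ℝ] ℝ) (x : E n) :
    ∑ i, ∑ j, B (rot n i j x) (rot n i j x) =
      2 * (‖x‖ ^ 2 * ∑ i, B (eb n i) (eb n i)) - 2 * B x x := by
  have hxx : B x x = ∑ i, ∑ j, x i * x j * B (eb n i) (eb n j) := by
    conv_lhs => rw [← sum_basis x]
    simp only [map_sum, map_smul, sum_apply, smul_apply, smul_eq_mul, Finset.mul_sum, mul_assoc]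
    rw [Finset.sum_comm]
    exact Finset.sum_congr rfl fun i _ => Finset.sum_congr rfl fun j _ => by ring
  have h : ∀ i j, B (rot n i j x) (rot n i j x) =
      (x i * x i) * B (eb n j) (eb n j) + (x j * x j) * B (eb n i) (eb n i)
        - x i * x j * B (eb n i) (eb n j) - x j * x i * B (eb n j) (eb n i) := by
    intro i j
    simp only [rot_apply, map_sub, map_smul, sub_apply,
      smul_apply, smul_eq_mul]
    ring
  simp only [h, Finset.sum_sub_distrib, Finset.sum_add_distrib]
  rw [Finset.sum_comm (f := fun i j => x j * x i * B (eb n j) (eb n i)), ← hxx]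
  simp only [← Finset.mul_sum, ← Finset.sum_mul, sum_sq]
  ring

/-- The Laplacian in polar form: `½ Σ L_ij² = |x|²Δ - N² - (n-2)N`. -/
theorem polar {n : ℕ} {v : E n → ℝ} {s : Set (E n)}
    (hs : IsOpen s) (hv : ContDiffOn ℝ ∞ v s) {x : E n} (hx : x ∈ s) :
    ∑ i, ∑ j, linDer (rot n i j) (linDer (rot n i j) v) x =
      2 * (‖x‖ ^ 2 * lap n v x - NOp n (NOp n v) x - ((n : ℝ) - 2) * NOp n v x) := by
  have h1 : NOp n (NOp n v) x = fderiv ℝ (fderiv ℝ v) x x x + NOp n v x := by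
    simp only [NOp_eq, linDer_linDer _ _ hs hv hx]
    simp [linDer]
  have h2 : ∑ i, ∑ j, fderiv ℝ v x (rot n i j (rot n i j x)) =
      (2 - 2 * (n : ℝ)) * NOp n v x := by
    simp only [← map_sum]
    rw [sum_rot_rot]
    simp [NOp]
  simp only [linDer_linDer _ _ hs hv hx, Finset.sum_add_distrib]
  rw [sum_bilin_rot, h2, h1, lap_eq hs hv hx]
  ring

/-- The equation `Du = 0` in polar form, multiplied by `|x|²` and divided by `1 - |x|²`. -/
theorem polar_harmonic {n : ℕ} {u : E n → ℝ} (hu : ContDiffOn ℝ ∞ u (ball (0 : E n) 1))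
    (hH : HHarmonic n u) {x : E n} (hx : x ∈ ball (0 : E n) 1) :
    (1 - ‖x‖ ^ 2) * (NOp n (NOp n u) x + ((n : ℝ) - 2) * NOp n u x +
      (1 / 2) * ∑ i, ∑ j, linDer (rot n i j) (linDer (rot n i j) u) x) +
      2 * ((n : ℝ) - 2) * ‖x‖ ^ 2 * NOp n u x = 0 := by
  have h := hH x hx
  have hx1 : ‖x‖ < 1 := by simpa using hx
  have h0 : (1 - ‖x‖ ^ 2) ≠ 0 := by nlinarith [norm_nonneg x]
  have h2 : (1 - ‖x‖ ^ 2) * lap n u x + 2 * ((n : ℝ) - 2) * NOp n u x = 0 := by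
    have : (1 - ‖x‖ ^ 2) * ((1 - ‖x‖ ^ 2) * lap n u x + 2 * ((n : ℝ) - 2) * NOp n u x) = 0 := by
      rw [← h, show Nder n u x = NOp n u x from rfl]; ring
    exact (mul_eq_zero.1 this).resolve_left h0
  rw [polar isOpen_ball hu hx]
  linear_combination ‖x‖ ^ 2 * h2

end Polar

/-! ### Spherical eigenpolynomials -/

section Polynomials

open MvPolynomial

/-- A positive definite symmetric form turns an operator that is symmetric for it into one whose
eigenvectors span. -/
theorem eigen_span {V : Type*} [AddCommGroup V] [Module ℝ V] [FiniteDimensional ℝ V]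
    (b : V →ₗ[ℝ] V →ₗ[ℝ] ℝ) (hsymm : ∀ x y, b x y = b y x) (hpos : ∀ x, 0 ≤ b x x)
    (hdef : ∀ x, b x x = 0 → x = 0) (A : V →ₗ[ℝ] V) (hA : ∀ x y, b (A x) y = b x (A y))
    (S : Submodule ℝ V) (hS : ∀ (μ : ℝ) (x : V), A x = μ • x → x ∈ S) : S = ⊤ := by
  let core : InnerProductSpace.Core ℝ V :=
    { inner := fun x y => b x y
      conj_inner_symm := fun x y => by simpa using hsymm y x
      re_inner_nonneg := fun x => by simpa using hpos x
      add_left := fun x y z => by simp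
      smul_left := fun x y r => by simp
      definite := hdef }
  let _ : NormedAddCommGroup V := core.toNormedAddCommGroup
  let _ : InnerProductSpace ℝ V := InnerProductSpace.ofCore core.toCore
  have hsym : A.IsSymmetric := hA
  have h1 : (⨆ μ, Module.End.eigenspace A μ) = ⊤ :=
    Submodule.orthogonal_eq_bot_iff.1 hsym.orthogonalComplement_iSup_eigenspaces_eq_bot
  rw [eq_top_iff, ← h1, iSup_le_iff]
  exact fun μ x hx => hS μ x (Module.End.mem_eigenspace_iff.1 hx)

/-- The function on `ℝⁿ` given by a polynomial. -/
def pol {n : ℕ} (p : MvPolynomial (Fin n) ℝ) (x : E n) : ℝ := eval (fun i => x i) p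

theorem pol_contDiff {n : ℕ} (p : MvPolynomial (Fin n) ℝ) : ContDiff ℝ ∞ (pol p) := by
  induction p using MvPolynomial.induction_on with
  | C a =>
    have : pol (C a : MvPolynomial (Fin n) ℝ) = fun _ => a := by ext x; simp [pol]
    rw [this]; exact contDiff_const
  | add p q hp hq =>
    have : pol (p + q) = fun x => pol p x + pol q x := by ext x; simp [pol]
    rw [this]; exact hp.add hq
  | mul_X p i hp =>
    have : pol (p * X i) = fun x => pol p x * x i := by ext x; simp [pol]
    rw [this]; exact hp.mul (by fun_prop)

theorem pol_continuous {n : ℕ} (p : MvPolynomial (Fin n) ℝ) : Continuous (pol p) :=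
  (pol_contDiff p).continuous

theorem pol_add {n : ℕ} (p q : MvPolynomial (Fin n) ℝ) (x : E n) :
    pol (p + q) x = pol p x + pol q x := by simp [pol]

theorem pol_smul {n : ℕ} (c : ℝ) (p : MvPolynomial (Fin n) ℝ) (x : E n) :
    pol (c • p) x = c * pol p x := by simp [pol]

theorem pol_sum {n : ℕ} {ι : Type*} (s : Finset ι) (p : ι → MvPolynomial (Fin n) ℝ) (x : E n) :
    pol (∑ i ∈ s, p i) x = ∑ i ∈ s, pol (p i) x := by simp [pol]

theorem pol_fderiv {n : ℕ} (p : MvPolynomial (Fin n) ℝ) (x v : E n) :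
    fderiv ℝ (pol p) x v = ∑ i, pol (pderiv i p) x * v i := by
  induction p using MvPolynomial.induction_on with
  | C a =>
    have : pol (C a : MvPolynomial (Fin n) ℝ) = fun _ => a := by ext x; simp [pol]
    rw [this]; simp [pol]
  | add p q hp hq =>
    have : pol (p + q) = fun x => pol p x + pol q x := by ext x; simp [pol]
    rw [this, fderiv_fun_add ((pol_contDiff p).differentiable (by simp) x)
      ((pol_contDiff q).differentiable (by simp) x)]
    simp [hp, hq, pol_add, add_mul, Finset.sum_add_distrib]
  | mul_X p j hp =>
    have h1 : pol (p * X j) = fun x => pol p x * (EuclideanSpace.proj j : E n →L[ℝ] ℝ) x := by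
      ext x; simp [pol]
    rw [h1, fderiv_fun_mul ((pol_contDiff p).differentiable (by simp) x)
      (EuclideanSpace.proj j : E n →L[ℝ] ℝ).differentiableAt, ContinuousLinearMap.fderiv]
    simp only [add_apply, smul_apply, smul_eq_mul, hp, Derivation.leibniz, pderiv_X]
    simp only [pol_add, add_mul, Finset.sum_add_distrib]
    congr 1
    · rw [Finset.sum_eq_single j]
      · simp [pol]
      · intro i _ hij; simp [pol, hij.symm]
      · simp
    · rw [Finset.mul_sum]
      exact Finset.sum_congr rfl fun i _ => by simp [pol, mul_assoc]

/-- The angular derivation `x_i ∂_j - x_j ∂_i` on polynomials. -/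
def ang {n : ℕ} (i j : Fin n) : Derivation ℝ (MvPolynomial (Fin n) ℝ) (MvPolynomial (Fin n) ℝ) :=
  (X i : MvPolynomial (Fin n) ℝ) • pderiv j - (X j : MvPolynomial (Fin n) ℝ) • pderiv i

theorem ang_apply {n : ℕ} (i j : Fin n) (p : MvPolynomial (Fin n) ℝ) :
    ang i j p = X i * pderiv j p - X j * pderiv i p := rfl

theorem linDer_pol {n : ℕ} (i j : Fin n) (p : MvPolynomial (Fin n) ℝ) :
    linDer (rot n i j) (pol p) = pol (ang i j p) := by
  ext x
  rw [linDer, rot_apply, map_sub, map_smul, map_smul, pol_fderiv, pol_fderiv, ang_apply]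
  simp [pol]

theorem ang_homog {n d : ℕ} (i j : Fin n) {p : MvPolynomial (Fin n) ℝ} (hp : p.IsHomogeneous d) :
    (ang i j p).IsHomogeneous d := by
  rw [ang_apply]
  rcases d with _ | d
  · obtain ⟨a, rfl⟩ : ∃ a, p = C a :=
      ⟨_, totalDegree_eq_zero_iff_eq_C.1 ((totalDegree_zero_iff_isHomogeneous _).2 hp)⟩
    simpa using isHomogeneous_zero _ _ _
  · have h : ∀ i j : Fin n, (X i * pderiv j p : MvPolynomial (Fin n) ℝ).IsHomogeneous (d + 1) := by
      intro i j
      have := (isHomogeneous_X ℝ i).mul (hp.pderiv (i := j))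
      rwa [add_comm] at this
    exact (h i j).sub (h j i)

/-- The spherical Laplacian with the sign that makes it nonnegative, on polynomials of all
degrees: `-½ Σ (x_i ∂_j - x_j ∂_i)²`. -/
def sphLap (n : ℕ) : MvPolynomial (Fin n) ℝ →ₗ[ℝ] MvPolynomial (Fin n) ℝ :=
  -(1 / 2 : ℝ) • ∑ i, ∑ j, (ang i j).toLinearMap ∘ₗ (ang i j).toLinearMap

theorem sphLap_apply {n : ℕ} (p : MvPolynomial (Fin n) ℝ) :
    sphLap n p = (-(1 / 2 : ℝ)) • ∑ i, ∑ j, ang i j (ang i j p) := by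
  simp [sphLap]

theorem sphLap_homog {n d : ℕ} {p : MvPolynomial (Fin n) ℝ}
    (hp : p ∈ homogeneousSubmodule (Fin n) ℝ d) : sphLap n p ∈ homogeneousSubmodule (Fin n) ℝ d := by
  rw [sphLap_apply]
  exact Submodule.smul_mem _ _ (Submodule.sum_mem _ fun i _ => Submodule.sum_mem _ fun j _ =>
    ang_homog i j (ang_homog i j hp))

theorem int_pol {n : ℕ} (hn : 1 ≤ n) {f : E n → ℝ} (hf : ContinuousOn f (sphere (0 : E n) 1))
    (p : MvPolynomial (Fin n) ℝ) : Integrable (fun ζ => f ζ * pol p ζ) (sphMeasure n) :=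
  sph_integrable hn (hf.mul (pol_continuous p).continuousOn)

/-- The linear functional `p ↦ ∫ f p dσ` on polynomials. -/
def pairing {n : ℕ} (hn : 1 ≤ n) {f : E n → ℝ} (hf : ContinuousOn f (sphere (0 : E n) 1)) :
    MvPolynomial (Fin n) ℝ →ₗ[ℝ] ℝ where
  toFun p := ∫ ζ, f ζ * pol p ζ ∂(sphMeasure n)
  map_add' p q := by
    rw [← integral_add (int_pol hn hf p) (int_pol hn hf q)]
    simp only [pol_add, mul_add]
  map_smul' c p := by
    rw [RingHom.id_apply, smul_eq_mul, ← integral_const_mul]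
    simp only [pol_smul]
    congr 1; ext ζ; ring

/-- The `L²(σ)` form on polynomials. -/
def sphForm {n : ℕ} (hn : 1 ≤ n) :
    MvPolynomial (Fin n) ℝ →ₗ[ℝ] MvPolynomial (Fin n) ℝ →ₗ[ℝ] ℝ :=
  LinearMap.mk₂ ℝ (fun p q => ∫ ζ, pol p ζ * pol q ζ ∂(sphMeasure n))
    (fun p p' q => by
      rw [← integral_add (int_pol hn (pol_continuous p).continuousOn q)
        (int_pol hn (pol_continuous p').continuousOn q)]
      simp only [pol_add, add_mul])
    (fun c p q => by
      rw [smul_eq_mul, ← integral_const_mul]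
      simp only [pol_smul, mul_assoc])
    (fun p q q' => (pairing hn (pol_continuous p).continuousOn).map_add q q')
    (fun c p q => (pairing hn (pol_continuous p).continuousOn).map_smul c q)

theorem sphForm_apply {n : ℕ} (hn : 1 ≤ n) (p q : MvPolynomial (Fin n) ℝ) :
    sphForm hn p q = ∫ ζ, pol p ζ * pol q ζ ∂(sphMeasure n) := rfl

theorem sphForm_symm {n : ℕ} (hn : 1 ≤ n) (p q : MvPolynomial (Fin n) ℝ) :
    sphForm hn p q = sphForm hn q p := by
  simp only [sphForm_apply, mul_comm]

theorem sphForm_nonneg {n : ℕ} (hn : 1 ≤ n) (p : MvPolynomial (Fin n) ℝ) : 0 ≤ sphForm hn p p :=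
  integral_nonneg fun _ => mul_self_nonneg _

theorem pol_homog {n d : ℕ} {p : MvPolynomial (Fin n) ℝ} (hp : p.IsHomogeneous d) (c : ℝ)
    (x : E n) : pol p (c • x) = c ^ d * pol p x := by
  simp only [pol, eval_eq', Finset.mul_sum]
  refine Finset.sum_congr rfl fun m hm => ?_
  have hd : ∑ i, m i = d := by
    rw [← hp (mem_support_iff.1 hm), Finsupp.weight_apply, Finsupp.sum_fintype _ _ (by simp)]
    simp
  simp only [PiLp.smul_apply, smul_eq_mul, mul_pow, Finset.prod_mul_distrib,
    Finset.prod_pow_eq_pow_sum, hd]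
  ring

/-- Homogeneous polynomials are determined by their restriction to the sphere, so the form is
definite on them. -/
theorem sphForm_def {n d : ℕ} (hn : 1 ≤ n) {p : MvPolynomial (Fin n) ℝ} (hp : p.IsHomogeneous d)
    (h0 : sphForm hn p p = 0) : p = 0 := by
  have h1 := sph_eq_zero hn (pol_continuous p).continuousOn h0
  have h2 : ∀ x : E n, x ≠ 0 → pol p x = 0 := by
    intro x hx
    have hx' := norm_ne_zero_iff.2 hx
    have h3 := h1 (‖x‖⁻¹ • x) (by simp [norm_smul, hx'])
    rw [pol_homog hp] at h3
    exact (mul_eq_zero.1 h3).resolve_left (pow_ne_zero _ (inv_ne_zero hx'))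
  have hdense : Dense ({0}ᶜ : Set (E n)) := by
    have : Nonempty (Fin n) := ⟨⟨0, hn⟩⟩
    exact dense_compl_singleton 0
  have h4 : pol p = fun _ => 0 :=
    (pol_continuous p).ext_on hdense continuous_const fun x hx => h2 x hx
  refine MvPolynomial.funext fun y => ?_
  simpa [pol] using congrFun h4 (WithLp.toLp 2 y)

theorem sphForm_ang {n : ℕ} (hn : 1 ≤ n) (i j : Fin n) (p q : MvPolynomial (Fin n) ℝ) :
    sphForm hn (ang i j p) q = -sphForm hn p (ang i j q) := by
  have h := integral_linDer_skew hn (rot_skew i j) isOpen_univ (subset_univ _)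
    (pol_contDiff (p * q)).contDiffOn
  rw [linDer_pol, Derivation.leibniz] at h
  have h2 : ∀ ζ : E n, pol (p • ang i j q + q • ang i j p) ζ =
      pol p ζ * pol (ang i j q) ζ + pol (ang i j p) ζ * pol q ζ := by
    intro ζ; simp [pol]; ring
  simp only [h2] at h
  rw [integral_add (int_pol hn (pol_continuous p).continuousOn _)
    (int_pol hn (pol_continuous (ang i j p)).continuousOn _)] at h
  rw [sphForm_apply, sphForm_apply]
  linarith

theorem sphForm_sphLap {n : ℕ} (hn : 1 ≤ n) (p q : MvPolynomial (Fin n) ℝ) :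
    sphForm hn (sphLap n p) q = (1 / 2) * ∑ i, ∑ j, sphForm hn (ang i j p) (ang i j q) := by
  rw [sphLap_apply]
  simp only [map_smul, map_sum, LinearMap.smul_apply, LinearMap.sum_apply,
    sphForm_ang hn _ _ (ang _ _ p) q, Finset.sum_neg_distrib, smul_eq_mul]
  ring

/-- A functional vanishing on the polynomials `p` with `sphLap p = μ p`, `μ ≥ 0`, vanishes. -/
theorem eigenpoly_dense {n : ℕ} (hn : 1 ≤ n) (F : MvPolynomial (Fin n) ℝ →ₗ[ℝ] ℝ)
    (hF : ∀ (μ : ℝ) (p : MvPolynomial (Fin n) ℝ), 0 ≤ μ → sphLap n p = μ • p → F p = 0) :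
    F = 0 := by
  have key : ∀ d, ∀ p ∈ homogeneousSubmodule (Fin n) ℝ d, F p = 0 := by
    intro d
    have : FiniteDimensional ℝ (homogeneousSubmodule (Fin n) ℝ d) :=
      Module.Finite.iff_fg.2 (homogeneousSubmodule_fg (Fin n) ℝ d)
    let V := homogeneousSubmodule (Fin n) ℝ d
    let A : V →ₗ[ℝ] V := (sphLap n).restrict fun p hp => sphLap_homog hp
    have hA : ∀ p : V, ((A p : V) : MvPolynomial (Fin n) ℝ) = sphLap n p := fun p => rfl
    have h := eigen_span ((sphForm hn).domRestrict₁₂ V V)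
      (fun x y => sphForm_symm hn x y) (fun x => sphForm_nonneg hn x)
      (fun x hx => Subtype.ext (sphForm_def hn x.2 hx)) A
      (fun x y => by
        change sphForm hn (sphLap n x) y = sphForm hn x (sphLap n y)
        rw [sphForm_symm hn x, sphForm_sphLap, sphForm_sphLap]
        simp only [sphForm_symm hn (ang _ _ (x : MvPolynomial (Fin n) ℝ))])
      (LinearMap.ker (F ∘ₗ V.subtype)) (fun μ x hx => by
        rw [LinearMap.mem_ker, LinearMap.comp_apply, Submodule.subtype_apply]
        have hx' : sphLap n x = μ • (x : MvPolynomial (Fin n) ℝ) := congrArg Subtype.val hx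
        rcases lt_or_ge μ 0 with hμ | hμ
        · have h1 : 0 ≤ sphForm hn (sphLap n x) x := by
            rw [sphForm_sphLap]
            exact mul_nonneg (by norm_num) (Finset.sum_nonneg fun i _ => Finset.sum_nonneg
              fun j _ => sphForm_nonneg hn _)
          rw [hx', map_smul, LinearMap.smul_apply, smul_eq_mul] at h1
          have h2 : sphForm hn (x : MvPolynomial (Fin n) ℝ) x = 0 := by
            have := sphForm_nonneg hn (x : MvPolynomial (Fin n) ℝ)
            nlinarith
          rw [sphForm_def hn x.2 h2, map_zero]
        · exact hF μ x hμ hx')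
    intro p hp
    have h2 : (⟨p, hp⟩ : V) ∈ LinearMap.ker (F ∘ₗ V.subtype) := by rw [h]; trivial
    simpa using h2
  refine LinearMap.ext fun p => ?_
  rw [← sum_homogeneousComponent p, map_sum]
  exact Finset.sum_eq_zero fun d _ => key d _ (homogeneousComponent_mem d p)

end Polynomials

/-! ### Vanishing of all angular components -/

section Main

open MvPolynomial

/-- The angular part of the equation, moved onto an eigenpolynomial by parts. -/
theorem angular_part {n : ℕ} (hn : 1 ≤ n) {u : E n → ℝ}
    (hu : ContDiffOn ℝ ∞ u (ball (0 : E n) 1)) {μ : ℝ} {p : MvPolynomial (Fin n) ℝ}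
    (hp : sphLap n p = μ • p) {r : ℝ} (hr : r ∈ Ioo (0 : ℝ) 1) :
    (1 / 2) * ∑ i, ∑ j, ∫ ζ, linDer (rot n i j) (linDer (rot n i j) u) (r • ζ) * pol p ζ
      ∂(sphMeasure n) = -μ * ∫ ζ, u (r • ζ) * pol p ζ ∂(sphMeasure n) := by
  have hr' : r ∈ Ioo (-1 : ℝ) 1 := ⟨by linarith [hr.1], hr.2⟩
  have hc : ContinuousOn (fun ζ : E n => u (r • ζ)) (sphere (0 : E n) 1) :=
    hu.continuousOn.comp (by fun_prop) fun ζ hζ => smul_mem_ball hr' hζ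
  have h1 : ∀ i j, ∫ ζ, linDer (rot n i j) (linDer (rot n i j) u) (r • ζ) * pol p ζ
      ∂(sphMeasure n) = pairing hn hc (ang i j (ang i j p)) := by
    intro i j
    rw [parts_skew hn (rot_skew i j) (linDer_contDiffOn _ isOpen_ball hu) (pol_contDiff p) hr,
      linDer_pol, parts_skew hn (rot_skew i j) hu (pol_contDiff _) hr, linDer_pol, neg_neg]
    rfl
  have h2 : pairing hn hc (sphLap n p) = μ * pairing hn hc p := by
    rw [hp, map_smul, smul_eq_mul]
  have h3 : ∫ ζ, u (r • ζ) * pol p ζ ∂(sphMeasure n) = pairing hn hc p := rfl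
  rw [sphLap_apply] at h2
  simp only [map_smul, map_sum, smul_eq_mul] at h2
  simp only [h1, h3]
  linarith

/-- The equation `Du = 0`, paired with an eigenpolynomial of eigenvalue `μ`. -/
theorem radial_equation {n : ℕ} (hn : 1 ≤ n) {u : E n → ℝ}
    (hu : ContDiffOn ℝ ∞ u (ball (0 : E n) 1)) (hH : HHarmonic n u) {μ : ℝ}
    {p : MvPolynomial (Fin n) ℝ} (hp : sphLap n p = μ • p) {r : ℝ} (hr : r ∈ Ioo (0 : ℝ) 1) :
    (1 - r ^ 2) * ((∫ ζ, (NOp n)^[2] u (r • ζ) * pol p ζ ∂(sphMeasure n)) +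
      ((n : ℝ) - 2) * (∫ ζ, (NOp n)^[1] u (r • ζ) * pol p ζ ∂(sphMeasure n)) -
      μ * ∫ ζ, (NOp n)^[0] u (r • ζ) * pol p ζ ∂(sphMeasure n)) +
      2 * ((n : ℝ) - 2) * r ^ 2 * (∫ ζ, (NOp n)^[1] u (r • ζ) * pol p ζ ∂(sphMeasure n)) = 0 := by
  have hr' : r ∈ Ioo (-1 : ℝ) 1 := ⟨by linarith [hr.1], hr.2⟩
  have hint : ∀ v : E n → ℝ, ContDiffOn ℝ ∞ v (ball (0 : E n) 1) →
      Integrable (fun ζ => v (r • ζ) * pol p ζ) (sphMeasure n) := fun v hv =>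
    int_pol hn (hv.continuousOn.comp (by fun_prop) fun ζ hζ => smul_mem_ball hr' hζ) p
  have i1 := hint _ (NOp_iter_contDiffOn isOpen_ball hu 1)
  have i2 := hint _ (NOp_iter_contDiffOn isOpen_ball hu 2)
  have iL : ∀ i j, Integrable (fun ζ => linDer (rot n i j) (linDer (rot n i j) u) (r • ζ) *
      pol p ζ) (sphMeasure n) := fun i j =>
    hint _ (linDer_contDiffOn _ isOpen_ball (linDer_contDiffOn _ isOpen_ball hu))
  have iS : Integrable (fun ζ => ∑ i, ∑ j, linDer (rot n i j) (linDer (rot n i j) u) (r • ζ) *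
      pol p ζ) (sphMeasure n) :=
    integrable_finsetSum _ fun i _ => integrable_finsetSum _ fun j _ => iL i j
  have hpt : ∫ ζ, ((1 - r ^ 2) * ((NOp n)^[2] u (r • ζ) * pol p ζ) +
      ((1 - r ^ 2) * ((n : ℝ) - 2) + 2 * ((n : ℝ) - 2) * r ^ 2) *
        ((NOp n)^[1] u (r • ζ) * pol p ζ)) +
      (1 - r ^ 2) * (1 / 2) * (∑ i, ∑ j, linDer (rot n i j) (linDer (rot n i j) u) (r • ζ) *
        pol p ζ) ∂(sphMeasure n) = ∫ ζ, (0 : ℝ) ∂(sphMeasure n) := by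
    refine sph_integral_congr fun ζ hζ => ?_
    have h := polar_harmonic hu hH (smul_mem_ball hr' hζ)
    have hζ1 : ‖ζ‖ = 1 := by simpa using hζ
    rw [norm_smul, hζ1, mul_one, Real.norm_eq_abs, sq_abs] at h
    simp only [← Finset.sum_mul]
    simp only [Function.iterate_succ_apply', Function.iterate_zero, id_eq]
    linear_combination pol p ζ * h
  have i12 : Integrable (fun ζ => (1 - r ^ 2) * ((NOp n)^[2] u (r • ζ) * pol p ζ) +
      ((1 - r ^ 2) * ((n : ℝ) - 2) + 2 * ((n : ℝ) - 2) * r ^ 2) *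
        ((NOp n)^[1] u (r • ζ) * pol p ζ)) (sphMeasure n) :=
    (i2.const_mul _).add (i1.const_mul _)
  rw [integral_add i12 (iS.const_mul _),
    integral_add (i2.const_mul _) (i1.const_mul _), integral_const_mul, integral_const_mul,
    integral_const_mul, integral_finsetSum _ fun i _ => integrable_finsetSum _ fun j _ => iL i j,
    integral_zero] at hpt
  simp only [integral_finsetSum _ fun j _ => iL _ j] at hpt
  have hang := angular_part hn hu hp hr
  simp only [Function.iterate_zero, id_eq]
  linear_combination hpt - (1 - r ^ 2) * hang

/-- A continuous function on the sphere that is orthogonal to all polynomials vanishes. -/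
theorem eq_zero_of_pairing {n : ℕ} (hn : 1 ≤ n) {f : E n → ℝ}
    (hf : ContinuousOn f (sphere (0 : E n) 1)) (h0 : pairing hn hf = 0) :
    ∀ ζ ∈ sphere (0 : E n) 1, f ζ = 0 := by
  have := sph_prob hn
  obtain ⟨C, hC⟩ := (isCompact_sphere (0 : E n) 1).exists_bound_of_continuousOn hf
  let K := sphere (0 : E n) 1
  have : CompactSpace K := isCompact_iff_compactSpace.1 (isCompact_sphere (0 : E n) 1)
  let φ : MvPolynomial (Fin n) ℝ →ₐ[ℝ] C(K, ℝ) :=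
    aeval fun i => ⟨fun ζ : K => (ζ : E n) i, by fun_prop⟩
  have hφ : ∀ p (ζ : K), φ p ζ = pol p ζ := by
    intro p ζ
    induction p using MvPolynomial.induction_on with
    | C a => simp [φ, pol]
    | add p q hp hq => simp [hp, hq, pol_add]
    | mul_X p i hp => rw [map_mul, ContinuousMap.mul_apply, hp]; simp [φ, pol]
  have hsep : (φ.range).SeparatesPoints := by
    intro x y hxy
    obtain ⟨i, hi⟩ : ∃ i, (x : E n) i ≠ (y : E n) i := by
      by_contra! h
      exact hxy (Subtype.ext (PiLp.ext h))
    refine ⟨_, ⟨φ (X i), ⟨X i, rfl⟩, rfl⟩, ?_⟩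
    simpa [φ] using hi
  have hcK : Continuous (fun ζ : K => f ζ) := continuousOn_iff_continuous_domRestrict.1 hf
  have hff : 0 ≤ ∫ ζ, f ζ * f ζ ∂(sphMeasure n) := integral_nonneg fun _ => mul_self_nonneg _
  refine sph_eq_zero hn hf (le_antisymm (le_of_forall_pos_le_add fun ε hε => ?_) hff)
  have hC' : 0 < |C| + 1 := by positivity
  obtain ⟨⟨_, p, rfl⟩, hp⟩ :=
    ContinuousMap.exists_mem_subalgebra_near_continuous_of_separatesPoints φ.range hsep _ hcK
      (ε / (|C| + 1)) (by positivity)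
  have hp' : ∀ ζ ∈ sphere (0 : E n) 1, |pol p ζ - f ζ| < ε / (|C| + 1) := by
    intro ζ hζ
    have := hp ⟨ζ, hζ⟩
    rw [Real.norm_eq_abs] at this
    rw [← hφ p ⟨ζ, hζ⟩]
    exact this
  have i_ff : Integrable (fun ζ => f ζ * f ζ) (sphMeasure n) := sph_integrable hn (hf.mul hf)
  have h1 : ∫ ζ, f ζ * pol p ζ ∂(sphMeasure n) = 0 := LinearMap.congr_fun h0 p
  have h2 : ∫ ζ, f ζ * f ζ ∂(sphMeasure n) =
      ∫ ζ, (f ζ * f ζ - f ζ * pol p ζ) ∂(sphMeasure n) := by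
    rw [integral_sub i_ff (int_pol hn hf p), h1, sub_zero]
  rw [h2, zero_add]
  have h3 : ∫ ζ, (f ζ * f ζ - f ζ * pol p ζ) ∂(sphMeasure n) ≤ ∫ _, ε ∂(sphMeasure n) := by
    refine integral_mono_ae (i_ff.sub (int_pol hn hf p))
      (integrable_const ε) ?_
    filter_upwards [ae_sphere n] with ζ hζ
    have e1 : |f ζ| ≤ |C| + 1 := by
      have := hC ζ hζ
      rw [Real.norm_eq_abs] at this
      linarith [le_abs_self C]
    have e2 := (hp' ζ hζ).le
    calc f ζ * f ζ - f ζ * pol p ζ = -(f ζ * (pol p ζ - f ζ)) := by ring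
      _ ≤ |f ζ * (pol p ζ - f ζ)| := neg_le_abs _
      _ = |f ζ| * |pol p ζ - f ζ| := abs_mul _ _
      _ ≤ (|C| + 1) * (ε / (|C| + 1)) := mul_le_mul e1 e2 (abs_nonneg _) hC'.le
      _ = ε := by field_simp
  simpa using h3

/-- Small-o growth of the pairings of `N^{n-1}u` with polynomials forces `u` to be constant. -/
theorem const_of_small {n k : ℕ} (hk : 1 ≤ k) (hnk : n = 2 * k + 1) {u : E n → ℝ}
    (hu : ContDiffOn ℝ ∞ u (ball (0 : E n) 1)) (hH : HHarmonic n u)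
    (hs : ∀ p : MvPolynomial (Fin n) ℝ, Tendsto (fun r : ℝ =>
      (∫ ζ, (NOp n)^[n - 1] u (r • ζ) * pol p ζ ∂(sphMeasure n)) / Real.log (1 / (1 - r)))
      (𝓝[<] (1 : ℝ)) (𝓝 0)) :
    ∀ x ∈ ball (0 : E n) 1, u x = u 0 := by
  have hn : 1 ≤ n := by omega
  have hn2 : (n : ℝ) - 2 = 2 * k - 1 := by rw [hnk]; push_cast; ring
  have hn1 : n - 1 = 2 * k := by omega
  have key : ∀ r ∈ Ioo (0 : ℝ) 1, ∀ ζ ∈ sphere (0 : E n) 1, u (r • ζ) - u 0 = 0 := by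
    intro r hr
    have hr' : r ∈ Ioo (-1 : ℝ) 1 := ⟨by linarith [hr.1], hr.2⟩
    have hc0 : ContinuousOn (fun ζ : E n => u (r • ζ)) (sphere (0 : E n) 1) :=
      hu.continuousOn.comp (by fun_prop) fun ζ hζ => smul_mem_ball hr' hζ
    have hc : ContinuousOn (fun ζ : E n => u (r • ζ) - u 0) (sphere (0 : E n) 1) :=
      hc0.sub continuousOn_const
    refine eq_zero_of_pairing hn hc (eigenpoly_dense hn _ fun μ p hμ hp => ?_)
    have hconst := chain_const
      (W := fun j r => ∫ ζ, (NOp n)^[j] u (r • ζ) * pol p ζ ∂(sphMeasure n)) hk hμ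
      (a := u 0 * ∫ ζ, pol p ζ ∂(sphMeasure n)) ?_ ?_ ?_ ?_ r hr
    · change ∫ ζ, (u (r • ζ) - u 0) * pol p ζ ∂(sphMeasure n) = 0
      simp only [sub_mul]
      rw [integral_sub (int_pol hn hc0 p) (int_pol hn continuousOn_const p), integral_const_mul,
        sub_eq_zero]
      exact hconst
    · intro j t ht
      have := radial_deriv hn (NOp_iter_contDiffOn isOpen_ball hu j) (pol_continuous p) ht
      simp only [Function.iterate_succ_apply']
      exact this
    · intro t ht
      have := radial_equation hn hu hH hp ht
      rwa [hn2] at this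
    · exact radial_tendsto_zero hn hu (pol_continuous p)
    · have := hs p
      rwa [hn1] at this
  intro x hx
  rcases eq_or_ne x 0 with rfl | hx0
  · rfl
  · have hx' : 0 < ‖x‖ := norm_pos_iff.2 hx0
    have h := key ‖x‖ ⟨hx', by simpa using hx⟩ (‖x‖⁻¹ • x) (by simp [norm_smul, hx'.ne'])
    rw [smul_inv_smul₀ hx'.ne'] at h
    linarith

theorem NOp_iter_of_const {n : ℕ} {u : E n → ℝ} {c : ℝ} (hc : ∀ x ∈ ball (0 : E n) 1, u x = c)
    {m : ℕ} (hm : 1 ≤ m) : ∀ x ∈ ball (0 : E n) 1, (NOp n)^[m] u x = 0 := by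
  have step : ∀ (v : E n → ℝ) (a : ℝ), (∀ x ∈ ball (0 : E n) 1, v x = a) →
      ∀ x ∈ ball (0 : E n) 1, NOp n v x = 0 := by
    intro v a hv x hx
    have : v =ᶠ[𝓝 x] fun _ => a := by
      filter_upwards [isOpen_ball.mem_nhds hx] with y hy using hv y hy
    simp [NOp, this.fderiv_eq]
  induction m, hm using Nat.le_induction with
  | base => exact step u c hc
  | succ m _ ih => rw [Function.iterate_succ_apply']; exact step _ 0 ih

theorem tendsto_log_one_div :
    Tendsto (fun r : ℝ => Real.log (1 / (1 - r))) (𝓝[<] 1) atTop := by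
  have h : Tendsto (fun r : ℝ => 1 - r) (𝓝[<] 1) (𝓝[>] 0) := by
    refine tendsto_nhdsWithin_iff.2 ⟨?_, ?_⟩
    · have : Tendsto (fun r : ℝ => 1 - r) (𝓝 1) (𝓝 (1 - 1)) :=
        (continuous_const.sub continuous_id).tendsto 1
      rw [sub_self] at this
      exact this.mono_left nhdsWithin_le_nhds
    · filter_upwards [self_mem_nhdsWithin] with r hr
      exact sub_pos.2 (mem_Iio.1 hr)
  refine (tendsto_neg_atBot_atTop.comp (Real.tendsto_log_nhdsGT_zero.comp h)).congr fun r => ?_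
  simp [Real.log_inv]

end Main

/-- For odd `n ≥ 3` and `u` `H`-harmonic on `B_n` with a boundary
distribution, the following are equivalent : (1) `u` is constant; (2) `N^{n-1}u` has a
boundary distribution; (3) `∫ N^{n-1}u(rζ)Φ(ζ)dσ(ζ) = o(log(1/(1-r)))` as `r → 1⁻` for every
smooth `Φ`. -/
theorem stmt11 (n : ℕ) (hn : 3 ≤ n) (hodd : Odd n) (u : E n → ℝ)
    (hu : ContDiffOn ℝ ∞ u (ball (0 : E n) 1)) (hH : HHarmonic n u)
    (hbd : HasBoundaryDistribution n u) :
    ((∃ c : ℝ, ∀ x ∈ ball (0 : E n) 1, u x = c) ↔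
      (∀ Φ : E n → ℝ, ContDiff ℝ ∞ Φ →
        ∃ L : ℝ, Tendsto
          (fun r : ℝ => ∫ ζ, (NOp n)^[n - 1] u (r • ζ) * Φ ζ ∂(sphMeasure n))
          (𝓝[<] (1 : ℝ)) (𝓝 L))) ∧
    ((∀ Φ : E n → ℝ, ContDiff ℝ ∞ Φ →
        ∃ L : ℝ, Tendsto
          (fun r : ℝ => ∫ ζ, (NOp n)^[n - 1] u (r • ζ) * Φ ζ ∂(sphMeasure n))
          (𝓝[<] (1 : ℝ)) (𝓝 L)) ↔
      (∀ Φ : E n → ℝ, ContDiff ℝ ∞ Φ →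
        Tendsto
          (fun r : ℝ =>
            (∫ ζ, (NOp n)^[n - 1] u (r • ζ) * Φ ζ ∂(sphMeasure n)) / Real.log (1 / (1 - r)))
          (𝓝[<] (1 : ℝ)) (𝓝 0))) := by
  have h12 : (∃ c : ℝ, ∀ x ∈ ball (0 : E n) 1, u x = c) →
      (∀ Φ : E n → ℝ, ContDiff ℝ ∞ Φ →
        ∃ L : ℝ, Tendsto
          (fun r : ℝ => ∫ ζ, (NOp n)^[n - 1] u (r • ζ) * Φ ζ ∂(sphMeasure n))
          (𝓝[<] (1 : ℝ)) (𝓝 L)) := by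
    rintro ⟨c, hc⟩ Φ -
    refine ⟨0, tendsto_const_nhds.congr' ?_⟩
    filter_upwards [Ioo_mem_nhdsLT (zero_lt_one (α := ℝ))] with r hr
    have h0 := NOp_iter_of_const hc (m := n - 1) (by omega)
    rw [← integral_zero (E n) ℝ (μ := sphMeasure n)]
    refine sph_integral_congr fun ζ hζ => ?_
    rw [h0 _ (smul_mem_ball ⟨by linarith [hr.1], hr.2⟩ hζ), zero_mul]
  have h23 : (∀ Φ : E n → ℝ, ContDiff ℝ ∞ Φ →
        ∃ L : ℝ, Tendsto
          (fun r : ℝ => ∫ ζ, (NOp n)^[n - 1] u (r • ζ) * Φ ζ ∂(sphMeasure n))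
          (𝓝[<] (1 : ℝ)) (𝓝 L)) →
      (∀ Φ : E n → ℝ, ContDiff ℝ ∞ Φ →
        Tendsto
          (fun r : ℝ =>
            (∫ ζ, (NOp n)^[n - 1] u (r • ζ) * Φ ζ ∂(sphMeasure n)) / Real.log (1 / (1 - r)))
          (𝓝[<] (1 : ℝ)) (𝓝 0)) := by
    intro h Φ hΦ
    obtain ⟨L, hL⟩ := h Φ hΦ
    exact hL.div_atTop tendsto_log_one_div
  have h31 : (∀ Φ : E n → ℝ, ContDiff ℝ ∞ Φ →
        Tendsto
          (fun r : ℝ =>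
            (∫ ζ, (NOp n)^[n - 1] u (r • ζ) * Φ ζ ∂(sphMeasure n)) / Real.log (1 / (1 - r)))
          (𝓝[<] (1 : ℝ)) (𝓝 0)) →
      ∃ c : ℝ, ∀ x ∈ ball (0 : E n) 1, u x = c := by
    intro h
    obtain ⟨k, hk⟩ := hodd
    exact ⟨u 0, const_of_small (by omega) hk hu hH fun p => h _ (pol_contDiff p)⟩
  exact ⟨⟨h12, fun h => h31 (h23 h)⟩, ⟨h23, fun h => h12 (h31 h)⟩⟩
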